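/- arXiv:2311.10103 — 2 statements merged into one kernel-verified Lean document; each statement's English description precedes it below -/
import Mathlib

section
/- Let Φ be a Young function such that Φ and its conjugate Φ̃ are of class Δ₂ ∩ Δ', assume ℳ is countably generated modulo μ-null sets, let {T(x)}_{x∈ℝ^N} be an N-dimensional dynamical system on Ω, and let f satisfy (H₁)–(H₄). Let (ε_k) ⊆ (0,1] with ε_k → 0 and let (u_k) be measurable functions on Q×Ω admitting weak x-gradients Du_k : Q×Ω → ℝ^N, i.e. ∫_{Q×Ω} u_k(x,ω) (∂φ/∂x_i)(x) ψ(ω) dx dμ = −∫_{Q×Ω} (Du_k)_i(x,ω) φ(x) ψ(ω) dx dμ for all φ ∈ C_c^∞(Q), all bounded measurable ψ : Ω → ℝ, and 1 ≤ i ≤ N. Suppose sup_k ‖|Du_k|‖_{Φ,Q×Ω} < ∞ and the components of Du_k weakly stochastically 2-scale converge to the components of a measurable V : Q×Ω×ℝ^N → ℝ^N, ℤ^N-periodic in the last variable, with ‖|V|‖_{Φ,Q×Ω×Y} < ∞. Then ∫_{Q×Ω×Y} f(x,ω,y,V(x,ω,y)) dx dμ(ω) dy ≤ liminf_{k→∞}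 ∫_{Q×Ω} f(x, T(x/ε_k)ω, x/ε_k², Du_k(x,ω)) dx dμ(ω). -/
open MeasureTheory Filter Topology ENNReal

noncomputable section

/-- Euclidean norm on `Fin N → ℝ`. -/
def enorm2 {N : ℕ} (v : Fin N → ℝ) : ℝ := Real.sqrt (∑ i, v i ^ 2)

/-- `Φ : [0,∞) → [0,∞)` is a Young function: continuous, convex, positive on `(0,∞)`,
with `Φ(t)/t → 0` as `t → 0⁺` and `Φ(t)/t → ∞` as `t → ∞` (so `Φ(0) = 0`). -/
def IsYoung (Φ : ℝ → ℝ) : Prop :=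
  ContinuousOn Φ (Set.Ici 0) ∧ ConvexOn ℝ (Set.Ici 0) Φ ∧ Φ 0 = 0 ∧
    (∀ t : ℝ, 0 < t → 0 < Φ t) ∧ (∀ t : ℝ, 0 ≤ t → 0 ≤ Φ t) ∧
    Tendsto (fun t => Φ t / t) (nhdsWithin 0 (Set.Ioi 0)) (nhds 0) ∧
    Tendsto (fun t => Φ t / t) atTop atTop

/-- The `Δ₂`-condition (at infinity). -/
def Delta2 (Φ : ℝ → ℝ) : Prop :=
  ∃ α : ℝ, 0 < α ∧ ∃ t₀ : ℝ, 0 ≤ t₀ ∧ ∀ t : ℝ, t₀ ≤ t → Φ (2 * t) ≤ α * Φ t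

/-- The `Δ'`-condition (at infinity). -/
def DeltaPrime (Φ : ℝ → ℝ) : Prop :=
  ∃ k : ℝ, 0 < k ∧ ∃ t₀ s₀ : ℝ, 0 ≤ t₀ ∧ 0 ≤ s₀ ∧
    ∀ t s : ℝ, t₀ ≤ t → s₀ ≤ s → Φ (t * s) ≤ k * Φ t * Φ s

/-- The conjugate Young function `Φ̃(t) = sup_{s ≥ 0} (st − Φ(s))`. -/
def conjY (Φ : ℝ → ℝ) (t : ℝ) : ℝ := sSup ((fun s => s * t - Φ s) '' Set.Ici 0)

/-- The Luxemburg norm `‖u‖_{Φ,X} = inf {δ > 0 : ∫_X Φ(|u|/δ) dν ≤ 1}` (`+∞` if no such `δ`). -/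
def luxNorm {X : Type*} [MeasurableSpace X] (Φ : ℝ → ℝ) (ν : Measure X) (u : X → ℝ) : ℝ≥0∞ :=
  sInf {d : ℝ≥0∞ | ∃ δ : ℝ, 0 < δ ∧ d = ENNReal.ofReal δ ∧
    (∫⁻ x, ENNReal.ofReal (Φ (|u x| / δ)) ∂ν) ≤ 1}

/-- An `N`-dimensional dynamical system on `Ω` preserving `μ`. -/
def IsDynSys {N : ℕ} {Ω : Type*} [MeasurableSpace Ω] (μ : Measure Ω)
    (T : (Fin N → ℝ) → Ω → Ω) : Prop :=
  T 0 = id ∧ (∀ x y : Fin N → ℝ, T (x + y) = T x ∘ T y) ∧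
    (∀ x : Fin N → ℝ, MeasurePreserving (T x) μ μ) ∧
    Measurable fun p : (Fin N → ℝ) × Ω => T p.1 p.2

/-- `ℤ^N`-periodicity. -/
def ZPeriodic {N : ℕ} (g : (Fin N → ℝ) → ℝ) : Prop :=
  ∀ (y : Fin N → ℝ) (k : Fin N → ℤ), g (y + fun i => (k i : ℝ)) = g y

/-- The unit cube `Y = [0,1]^N`. -/
def Ycube (N : ℕ) : Set (Fin N → ℝ) := Set.Icc 0 1

/-- `ℳ` is countably generated modulo `μ`-null sets. -/
def CountGenModNull {Ω : Type*} [MeasurableSpace Ω] (μ : Measure Ω) : Prop :=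
  ∃ S : ℕ → Set Ω, (∀ n, MeasurableSet (S n)) ∧
    ∀ A : Set Ω, MeasurableSet A →
      ∃ B : Set Ω, MeasurableSet[MeasurableSpace.generateFrom (Set.range S)] B ∧
        μ (symmDiff A B) = 0

/-- Weak stochastic two-scale convergence of `(u k)` to `u₀` along the sequence `(ε k)`. -/
def WeakStoch2Scale {N : ℕ} {Ω : Type*} [MeasurableSpace Ω] (μ : Measure Ω)
    (T : (Fin N → ℝ) → Ω → Ω) (Q : Set (Fin N → ℝ)) (ε : ℕ → ℝ)
    (u : ℕ → (Fin N → ℝ) → Ω → ℝ) (u₀ : (Fin N → ℝ) → Ω → (Fin N → ℝ) → ℝ) : Prop :=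
  ∀ φ : (Fin N → ℝ) → ℝ, ContDiff ℝ (⊤ : ℕ∞) φ → HasCompactSupport φ → tsupport φ ⊆ Q →
    ∀ ψ : Ω → ℝ, Measurable ψ → (∃ C : ℝ, ∀ ω, |ψ ω| ≤ C) →
      ∀ g : (Fin N → ℝ) → ℝ, Continuous g → ZPeriodic g →
        Tendsto
          (fun k => ∫ x in Q, (∫ ω, u k x ω * φ x * ψ (T ((ε k)⁻¹ • x) ω) *
              g (((ε k) ^ 2)⁻¹ • x) ∂μ))
          atTop
          (nhds (∫ x in Q, (∫ ω, (∫ y in Ycube N, u₀ x ω y * φ x * ψ ω * g y) ∂μ)))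

open scoped Pointwise

lemma ycube_ae (N : ℕ) : Ycube N =ᵐ[volume] Set.pi Set.univ (fun _ : Fin N => Set.Ico (0:ℝ) 1) := by
  have := Measure.univ_pi_Ico_ae_eq_Icc (μ := fun _ : Fin N => (volume : Measure ℝ)) (f := 0) (g := 1)
  rw [Ycube]
  exact this.symm

lemma vol_ycube (N : ℕ) : (volume : Measure (Fin N → ℝ)) (Ycube N) = 1 := by
  rw [Ycube, Real.volume_Icc_pi]; simp

instance ycube_prob (N : ℕ) : IsProbabilityMeasure ((volume : Measure (Fin N → ℝ)).restrict (Ycube N)) :=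
  ⟨by simp [vol_ycube]⟩

lemma per_int {N : ℕ} (g : (Fin N → ℝ) → ℝ) (hg : ZPeriodic g) (s : Fin N → ℝ) :
    ∫ z in Ycube N, g (s + z) = ∫ z in Ycube N, g z := by
  rw [setIntegral_congr_set (ycube_ae N), setIntegral_congr_set (ycube_ae N)]
  set D := Set.pi Set.univ (fun _ : Fin N => Set.Ico (0:ℝ) 1) with hD
  have h1 := ZSpan.isAddFundamentalDomain' (Pi.basisFun ℝ (Fin N)) volume
  rw [ZSpan.fundamentalDomain_pi_basisFun] at h1
  have h2 := h1.vadd_of_comm s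
  have hm : ∀ v ∈ Submodule.span ℤ (Set.range (Pi.basisFun ℝ (Fin N))), ∃ k : Fin N → ℤ, v = fun i => (k i : ℝ) := by
    intro v hv
    have := (Module.Basis.mem_span_iff_repr_mem ℤ (Pi.basisFun ℝ (Fin N)) v).1 hv
    choose k hk using this
    refine ⟨k, ?_⟩
    ext i
    have := hk i
    simpa using this.symm
  have hcount : Countable ↥(Submodule.span ℤ (Set.range ⇑(Pi.basisFun ℝ (Fin N)))).toAddSubgroup :=
    inferInstanceAs (Countable (Submodule.span ℤ (Set.range ⇑(Pi.basisFun ℝ (Fin N)))))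
  have h3 := h1.setIntegral_eq h2 (f := g) (by
    rintro ⟨v, hv⟩ x
    obtain ⟨k, rfl⟩ := hm v hv
    have := hg x k
    rw [← this, add_comm]; rfl)
  rw [h3]
  have : s +ᵥ D = (fun z => s + z) '' D := rfl
  rw [this, (measurePreserving_add_left volume s).setIntegral_image_emb (measurableEmbedding_addLeft s)]

lemma per_fract {N : ℕ} (g : (Fin N → ℝ) → ℝ) (hg : ZPeriodic g) (y : Fin N → ℝ) :
    g y = g (fun i => Int.fract (y i)) := by
  have := hg (fun i => Int.fract (y i)) (fun i => ⌊y i⌋)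
  rw [← this]
  congr 1; ext i; simp [Int.fract_add_floor]

lemma avg {N : ℕ} (H : (Fin N → ℝ) → (Fin N → ℝ) → ℝ) (hH : Continuous (Function.uncurry H))
    (hper : ∀ x, ZPeriodic (H x)) (B r : ℝ) (hB : ∀ x y, |H x y| ≤ B)
    (hr : ∀ x, r < ‖x‖ → ∀ y, H x y = 0)
    (δ : ℕ → ℝ) (hδ : ∀ k, δ k ∈ Set.Ioc (0:ℝ) 1) (hδ0 : Tendsto δ atTop (𝓝 0)) :
    Tendsto (fun k => ∫ x, H x ((δ k)⁻¹ • x)) atTop (𝓝 (∫ x, ∫ y in Ycube N, H x y)) := by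
  have hB0 : 0 ≤ B := (abs_nonneg _).trans (hB 0 0)
  let W : ℕ → (Fin N → ℝ) × (Fin N → ℝ) → ℝ := fun k p =>
    H (p.1 + δ k • p.2) ((δ k)⁻¹ • p.1 + p.2)
  let W' : ℕ → (Fin N → ℝ) × (Fin N → ℝ) → ℝ := fun k p => H p.1 ((δ k)⁻¹ • p.1 + p.2)
  let m := (volume : Measure (Fin N → ℝ)).prod (volume.restrict (Ycube N))
  let bd : (Fin N → ℝ) × (Fin N → ℝ) → ℝ := fun p =>
    (Metric.closedBall (0 : Fin N → ℝ) (r+1)).indicator (fun _ => B) p.1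
  have hYm : MeasurableSet (Ycube N) := measurableSet_Icc
  have hbd : Integrable bd m := by
    have : Integrable ((Metric.closedBall (0 : Fin N → ℝ) (r+1)).indicator (fun _ => B)) volume := by
      rw [integrable_indicator_iff Metric.isClosed_closedBall.measurableSet]
      exact integrableOn_const (by exact (isCompact_closedBall _ _).measure_lt_top.ne)
    exact this.comp_fst _
  have haeY : ∀ᵐ p ∂m, p.2 ∈ Ycube N :=
    (Measure.quasiMeasurePreserving_snd (μ := (volume : Measure (Fin N → ℝ)))
      (ν := volume.restrict (Ycube N))).ae (ae_restrict_mem hYm)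
  have hnorm : ∀ z ∈ Ycube N, ‖z‖ ≤ 1 := by
    intro z hz
    rw [pi_norm_le_iff_of_nonneg zero_le_one]
    intro i
    rw [Real.norm_eq_abs, abs_le]
    have h1 := hz.1 i
    have h2 := hz.2 i
    simp at h1 h2
    constructor <;> linarith
  have bW : ∀ k, ∀ᵐ p ∂m, ‖W k p‖ ≤ bd p := by
    intro k
    filter_upwards [haeY] with p hp
    by_cases h : p.1 ∈ Metric.closedBall (0 : Fin N → ℝ) (r+1)
    · simp only [bd, Set.indicator_of_mem h]; exact hB _ _
    · simp only [bd, Set.indicator_of_notMem h]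
      rw [mem_closedBall_zero_iff, not_le] at h
      have h1 : ‖δ k • p.2‖ ≤ 1 := by
        rw [norm_smul, Real.norm_eq_abs, abs_of_pos (hδ k).1]
        have := hnorm _ hp
        have := (hδ k).2
        have := (hδ k).1
        nlinarith [norm_nonneg p.2]
      have h2 : ‖p.1‖ ≤ ‖p.1 + δ k • p.2‖ + ‖δ k • p.2‖ := by
        simpa using norm_sub_le (p.1 + δ k • p.2) (δ k • p.2)
      simp only [W]
      rw [hr _ (by linarith)]; simp
  have bW' : ∀ k, ∀ᵐ p ∂m, ‖W' k p‖ ≤ bd p := by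
    intro k
    filter_upwards with p
    by_cases h : p.1 ∈ Metric.closedBall (0 : Fin N → ℝ) (r+1)
    · simp only [bd, Set.indicator_of_mem h]; exact hB _ _
    · simp only [bd, Set.indicator_of_notMem h]
      rw [mem_closedBall_zero_iff, not_le] at h
      simp only [W']
      rw [hr _ (by linarith)]; simp
  have cW : ∀ k, Continuous (W k) := fun k =>
    hH.comp (by fun_prop : Continuous fun p : (Fin N → ℝ) × (Fin N → ℝ) => (p.1 + δ k • p.2, (δ k)⁻¹ • p.1 + p.2))
  have cW' : ∀ k, Continuous (W' k) := fun k =>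
    hH.comp (by fun_prop : Continuous fun p : (Fin N → ℝ) × (Fin N → ℝ) => (p.1, (δ k)⁻¹ • p.1 + p.2))
  have iW : ∀ k, Integrable (W k) m := fun k => hbd.mono' (cW k).aestronglyMeasurable (bW k)
  have iW' : ∀ k, Integrable (W' k) m := fun k => hbd.mono' (cW' k).aestronglyMeasurable (bW' k)
  have eW : ∀ k, ∫ p, W k p ∂m = ∫ x, H x ((δ k)⁻¹ • x) := by
    intro k
    rw [integral_prod_symm _ (iW k)]
    have : ∀ z : Fin N → ℝ, ∫ x, W k (x, z) = ∫ x, H x ((δ k)⁻¹ • x) := by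
      intro z
      rw [← integral_add_right_eq_self (fun x => H x ((δ k)⁻¹ • x)) (δ k • z)]
      congr 1; ext x
      simp only [W, smul_add, smul_smul, inv_mul_cancel₀ (hδ k).1.ne', one_smul]
    simp only [this]
    simp
  have eW' : ∀ k, ∫ p, W' k p ∂m = ∫ x, ∫ y in Ycube N, H x y := by
    intro k
    rw [integral_prod _ (iW' k)]
    congr 1; ext x
    exact per_int (H x) (hper x) ((δ k)⁻¹ • x)
  have key : Tendsto (fun k => ∫ p, (W k p - W' k p) ∂m) atTop (𝓝 (∫ p, (0:ℝ) ∂m)) := by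
    refine tendsto_integral_of_dominated_convergence (fun p => bd p + bd p)
      (fun k => ((cW k).sub (cW' k)).aestronglyMeasurable) (hbd.add hbd) ?_ ?_
    · intro k
      filter_upwards [bW k, bW' k] with p h1 h2
      exact (norm_sub_le _ _).trans (add_le_add h1 h2)
    · refine ae_of_all _ fun p => ?_
      let G : (Fin N → ℝ) → (Ycube N) → ℝ := fun x y => H x y
      have : CompactSpace (Ycube N) := isCompact_iff_compactSpace.1 isCompact_Icc
      have hG : Continuous (Function.uncurry G) :=
        hH.comp (by fun_prop : Continuous fun q : (Fin N → ℝ) × (Ycube N) => (q.1, (q.2 : Fin N → ℝ)))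
      have hu := Continuous.tendstoUniformly G hG p.1
      rw [Metric.tendstoUniformly_iff] at hu
      have ht : Tendsto (fun k => p.1 + δ k • p.2) atTop (𝓝 p.1) := by
        have := (hδ0.smul_const p.2).const_add p.1
        simpa using this
      rw [Metric.tendsto_atTop']
      intro e he
      have := (ht.eventually (hu e he))
      obtain ⟨n, hn⟩ := eventually_atTop.1 this
      refine ⟨n, fun k hk => ?_⟩
      set y := (δ k)⁻¹ • p.1 + p.2 with hy
      have h4 := hn k hk.le ⟨fun i => Int.fract (y i), by
        constructor <;> intro i
        · exact Int.fract_nonneg _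
        · exact (Int.fract_lt_one _).le⟩
      simp only [G] at h4
      rw [← per_fract _ (hper _), ← per_fract _ (hper _)] at h4
      rw [dist_comm] at h4
      simpa [W, W', Real.dist_eq] using h4
  have : ∀ k, ∫ p, (W k p - W' k p) ∂m = (∫ x, H x ((δ k)⁻¹ • x)) - ∫ x, ∫ y in Ycube N, H x y := by
    intro k
    rw [integral_sub (iW k) (iW' k), eW, eW']
  simp only [this, integral_zero] at key
  simpa using key.add_const (∫ x, ∫ y in Ycube N, H x y)

inductive Adm {N : ℕ} {Ω : Type*} [MeasurableSpace Ω] :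
    (((Fin N → ℝ) × Ω) × (Fin N → ℝ) → ℝ) → Prop
  | basic (φ : (Fin N → ℝ) → ℝ) (ψ : Ω → ℝ) (g : (Fin N → ℝ) → ℝ)
      (hφ : ContDiff ℝ (⊤ : ℕ∞) φ) (hφb : ∃ C, ∀ x, |φ x| ≤ C)
      (hψ : Measurable ψ) (hψb : ∃ C, ∀ x, |ψ x| ≤ C)
      (hg : Continuous g) (hgp : ZPeriodic g) : Adm (fun p => φ p.1.1 * ψ p.1.2 * g p.2)
  | add (a b) : Adm a → Adm b → Adm (fun p => a p + b p)

section
variable {N : ℕ} {Ω : Type*} [MeasurableSpace Ω]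

lemma bdd_mul {α : Type*} {a b : α → ℝ} (ha : ∃ C, ∀ x, |a x| ≤ C) (hb : ∃ C, ∀ x, |b x| ≤ C) :
    ∃ C, ∀ x, |a x * b x| ≤ C := by
  obtain ⟨A, hA⟩ := ha
  obtain ⟨B, hB⟩ := hb
  refine ⟨A * B, fun x => ?_⟩
  rw [abs_mul]
  exact mul_le_mul (hA x) (hB x) (abs_nonneg _) ((abs_nonneg _).trans (hA x))

lemma bdd_per {g : (Fin N → ℝ) → ℝ} (hg : Continuous g) (hgp : ZPeriodic g) : ∃ C, ∀ x, |g x| ≤ C := by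
  obtain ⟨C, hC⟩ := (isCompact_Icc (a := (0 : Fin N → ℝ)) (b := 1)).exists_bound_of_continuousOn hg.continuousOn
  refine ⟨C, fun x => ?_⟩
  rw [per_fract g hgp]
  exact hC _ ⟨fun i => Int.fract_nonneg _, fun i => (Int.fract_lt_one _).le⟩

lemma Adm.bdd {a : ((Fin N → ℝ) × Ω) × (Fin N → ℝ) → ℝ} (h : Adm a) : ∃ C, ∀ x, |a x| ≤ C := by
  induction h with
  | basic φ ψ g hφ hφb hψ hψb hg hgp =>
    have h1 : ∃ C, ∀ p : ((Fin N → ℝ) × Ω) × (Fin N → ℝ), |φ p.1.1| ≤ C := hφb.imp fun C h p => h _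
    have h2 : ∃ C, ∀ p : ((Fin N → ℝ) × Ω) × (Fin N → ℝ), |ψ p.1.2| ≤ C := hψb.imp fun C h p => h _
    have h3 : ∃ C, ∀ p : ((Fin N → ℝ) × Ω) × (Fin N → ℝ), |g p.2| ≤ C := (bdd_per hg hgp).imp fun C h p => h _
    exact bdd_mul (bdd_mul h1 h2) h3
  | add a b _ _ ha hb =>
    obtain ⟨A, hA⟩ := ha
    obtain ⟨B, hB⟩ := hb
    exact ⟨A + B, fun x => (abs_add_le _ _).trans (add_le_add (hA x) (hB x))⟩

lemma Adm.meas {a : ((Fin N → ℝ) × Ω) × (Fin N → ℝ) → ℝ} (h : Adm a) : Measurable a := by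
  induction h with
  | basic φ ψ g hφ hφb hψ hψb hg hgp =>
    have := hφ.continuous.measurable
    have := hg.measurable
    fun_prop
  | add a b _ _ ha hb => exact ha.add hb

lemma Adm.cont {a : ((Fin N → ℝ) × Ω) × (Fin N → ℝ) → ℝ} (h : Adm a) (ω : Ω) :
    Continuous fun q : (Fin N → ℝ) × (Fin N → ℝ) => a ((q.1, ω), q.2) := by
  induction h with
  | basic φ ψ g hφ hφb hψ hψb hg hgp =>
    have := hφ.continuous
    fun_prop
  | add a b _ _ ha hb => exact ha.add hb

lemma Adm.per {a : ((Fin N → ℝ) × Ω) × (Fin N → ℝ) → ℝ} (h : Adm a) (x : Fin N → ℝ) (ω : Ω) :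
    ZPeriodic fun y => a ((x, ω), y) := by
  induction h with
  | basic φ ψ g hφ hφb hψ hψb hg hgp =>
    intro y k
    simp only [hgp y k]
  | add a b _ _ ha hb => 
    intro y k
    simp only [ha y k, hb y k]

lemma Adm.congr {a b : ((Fin N → ℝ) × Ω) × (Fin N → ℝ) → ℝ} (ha : Adm a) (h : ∀ p, a p = b p) : Adm b := by
  have : a = b := funext h
  rwa [← this]

lemma Adm.const (c : ℝ) : Adm (fun _ : ((Fin N → ℝ) × Ω) × (Fin N → ℝ) => c) := by
  refine (Adm.basic (fun _ => c) (fun _ => 1) (fun _ => 1) contDiff_const ⟨_, fun _ => le_rfl⟩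
    measurable_const ⟨_, fun _ => le_rfl⟩ continuous_const (fun _ _ => rfl)).congr (by simp)

lemma Adm.mul {a b : ((Fin N → ℝ) × Ω) × (Fin N → ℝ) → ℝ} (ha : Adm a) (hb : Adm b) :
    Adm (fun p => a p * b p) := by
  induction ha with
  | basic φ ψ g hφ hφb hψ hψb hg hgp =>
    induction hb with
    | basic φ' ψ' g' hφ' hφb' hψ' hψb' hg' hgp' =>
      refine (Adm.basic (fun x => φ x * φ' x) (fun x => ψ x * ψ' x) (fun x => g x * g' x) (hφ.mul hφ')
        (bdd_mul hφb hφb') (hψ.mul hψ') (bdd_mul hψb hψb') (hg.mul hg') ?_).congr (fun p => by ring)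
      intro y k
      simp only [hgp y k, hgp' y k]
    | add a b _ _ ha hb => exact (Adm.add _ _ ha hb).congr (fun p => by ring)
  | add a b _ _ ha hb => exact (Adm.add _ _ ha hb).congr (fun p => by ring)

lemma Adm.sub {a b : ((Fin N → ℝ) × Ω) × (Fin N → ℝ) → ℝ} (ha : Adm a) (hb : Adm b) :
    Adm (fun p => a p - b p) := 
  (Adm.add _ _ ha ((Adm.const (-1)).mul hb)).congr (fun p => by ring)

/-- indicator approximability -/
def Apx (m : Measure (((Fin N → ℝ) × Ω) × (Fin N → ℝ))) (A : Set (((Fin N → ℝ) × Ω) × (Fin N → ℝ))) : Prop :=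
  MeasurableSet A ∧ ∀ η : ℝ≥0∞, 0 < η → ∃ χ, Adm χ ∧ (∀ p, χ p ∈ Set.Icc (0:ℝ) 1) ∧
    ∫⁻ p, ‖χ p - A.indicator 1 p‖ₑ ∂m ≤ η

lemma Apx.of_seq {m : Measure (((Fin N → ℝ) × Ω) × (Fin N → ℝ))} [IsFiniteMeasure m]
    {A : Set (((Fin N → ℝ) × Ω) × (Fin N → ℝ))} (hA : MeasurableSet A)
    (χ : ℕ → ((Fin N → ℝ) × Ω) × (Fin N → ℝ) → ℝ) (h1 : ∀ n, Adm (χ n))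
    (h2 : ∀ n p, χ n p ∈ Set.Icc (0:ℝ) 1)
    (h3 : ∀ᵐ p ∂m, Tendsto (fun n => χ n p) atTop (𝓝 (A.indicator 1 p))) : Apx m A := by
  refine ⟨hA, fun η hη => ?_⟩
  have : Tendsto (fun n => ∫⁻ p, ‖χ n p - A.indicator 1 p‖ₑ ∂m) atTop (𝓝 (∫⁻ p, 0 ∂m)) := by
    refine tendsto_lintegral_of_dominated_convergence (fun _ => 1) ?_ ?_ ?_ ?_
    · intro n
      have := (h1 n).meas
      have := (measurable_one (α := ℝ) (β := ((Fin N → ℝ) × Ω) × (Fin N → ℝ))).indicator hA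
      fun_prop
    · intro n
      refine ae_of_all _ fun p => ?_
      change ‖χ n p - A.indicator 1 p‖ₑ ≤ 1
      rw [Real.enorm_eq_ofReal_abs, ← ENNReal.ofReal_one]
      apply ENNReal.ofReal_le_ofReal
      have h := h2 n p
      have h' : A.indicator (1 : ((Fin N → ℝ) × Ω) × (Fin N → ℝ) → ℝ) p ∈ Set.Icc (0:ℝ) 1 := by
        by_cases hp : p ∈ A <;> simp [hp]
      rw [abs_le]; constructor <;> linarith [h.1, h.2, h'.1, h'.2]
    · simp
    · filter_upwards [h3] with p hp
      have := (hp.sub_const (A.indicator 1 p)).enorm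
      simpa using this
  simp only [lintegral_zero] at this
  obtain ⟨n, hn⟩ := (this.eventually_le_const hη).exists
  exact ⟨χ n, h1 n, h2 n, hn⟩

lemma Apx.compl {m : Measure (((Fin N → ℝ) × Ω) × (Fin N → ℝ))}
    {A : Set (((Fin N → ℝ) × Ω) × (Fin N → ℝ))} (hA : Apx m A) : Apx m Aᶜ := by
  refine ⟨hA.1.compl, fun η hη => ?_⟩
  obtain ⟨χ, h1, h2, h3⟩ := hA.2 η hη
  refine ⟨_, (Adm.const 1).sub h1, fun p => ⟨by linarith [(h2 p).2], by linarith [(h2 p).1]⟩, ?_⟩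
  refine le_trans (le_of_eq ?_) h3
  congr 1; ext p
  rw [← enorm_neg]
  congr 1
  by_cases hp : p ∈ A <;> simp [hp]

lemma or_ineq {a b s t : ℝ} (ha : a ∈ Set.Icc (0:ℝ) 1) (hb : b ∈ Set.Icc (0:ℝ) 1)
    (hs : s ∈ Set.Icc (0:ℝ) 1) (ht : t ∈ Set.Icc (0:ℝ) 1) :
    |1 - (1 - a) * (1 - b) - (1 - (1 - s) * (1 - t))| ≤ |a - s| + |b - t| := by
  have e : 1 - (1 - a) * (1 - b) - (1 - (1 - s) * (1 - t)) = (a - s) * (1 - b) + (b - t) * (1 - s) := by ring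
  rw [e]
  refine (abs_add_le _ _).trans (add_le_add ?_ ?_)
  · rw [abs_mul]
    refine mul_le_of_le_one_right (abs_nonneg _) ?_
    rw [abs_of_nonneg] <;> linarith [hb.1, hb.2]
  · rw [abs_mul]
    refine mul_le_of_le_one_right (abs_nonneg _) ?_
    rw [abs_of_nonneg] <;> linarith [hs.1, hs.2]

lemma Apx.union {m : Measure (((Fin N → ℝ) × Ω) × (Fin N → ℝ))}
    {A B : Set (((Fin N → ℝ) × Ω) × (Fin N → ℝ))} (hA : Apx m A) (hB : Apx m B) : Apx m (A ∪ B) := by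
  refine ⟨hA.1.union hB.1, fun η hη => ?_⟩
  obtain ⟨a, a1, a2, a3⟩ := hA.2 (η/2) (ENNReal.half_pos hη.ne')
  obtain ⟨b, b1, b2, b3⟩ := hB.2 (η/2) (ENNReal.half_pos hη.ne')
  refine ⟨_, (Adm.const 1).sub (((Adm.const 1).sub a1).mul ((Adm.const 1).sub b1)), fun p => ?_, ?_⟩
  · obtain ⟨h1, h2⟩ := a2 p
    obtain ⟨h3, h4⟩ := b2 p
    constructor <;> nlinarith [mul_nonneg (sub_nonneg.2 h2) (sub_nonneg.2 h4)]
  · calc _ ≤ ∫⁻ p, (‖a p - A.indicator 1 p‖ₑ + ‖b p - B.indicator 1 p‖ₑ) ∂m := by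
          apply lintegral_mono
          intro p
          simp only [Real.enorm_eq_ofReal_abs]
          rw [← ENNReal.ofReal_add (abs_nonneg _) (abs_nonneg _)]
          apply ENNReal.ofReal_le_ofReal
          obtain ⟨h1, h2⟩ := a2 p
          obtain ⟨h3, h4⟩ := b2 p
          have hu : (A ∪ B).indicator (1 : ((Fin N → ℝ) × Ω) × (Fin N → ℝ) → ℝ) p =
              1 - (1 - A.indicator (1 : ((Fin N → ℝ) × Ω) × (Fin N → ℝ) → ℝ) p) * (1 - B.indicator (1 : ((Fin N → ℝ) × Ω) × (Fin N → ℝ) → ℝ) p) := by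
            by_cases hp : p ∈ A <;> by_cases hq : p ∈ B <;> simp [hp, hq]
          rw [hu]
          have hs : A.indicator (1 : ((Fin N → ℝ) × Ω) × (Fin N → ℝ) → ℝ) p ∈ Set.Icc (0:ℝ) 1 := by
            by_cases hp : p ∈ A <;> simp [hp]
          have ht : B.indicator (1 : ((Fin N → ℝ) × Ω) × (Fin N → ℝ) → ℝ) p ∈ Set.Icc (0:ℝ) 1 := by
            by_cases hp : p ∈ B <;> simp [hp]
          exact or_ineq ⟨h1, h2⟩ ⟨h3, h4⟩ hs ht
      _ = (∫⁻ p, ‖a p - A.indicator 1 p‖ₑ ∂m) + ∫⁻ p, ‖b p - B.indicator 1 p‖ₑ ∂m := by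
          apply lintegral_add_left
          have := a1.meas
          have := (measurable_one (α := ℝ) (β := ((Fin N → ℝ) × Ω) × (Fin N → ℝ))).indicator hA.1
          fun_prop
      _ ≤ η/2 + η/2 := add_le_add a3 b3
      _ = η := ENNReal.add_halves η

lemma Apx.empty {m : Measure (((Fin N → ℝ) × Ω) × (Fin N → ℝ))} : Apx m ∅ :=
  ⟨MeasurableSet.empty, fun η hη => ⟨_, Adm.const 0, by simp, by simp⟩⟩

lemma Apx.iUnion {m : Measure (((Fin N → ℝ) × Ω) × (Fin N → ℝ))} [IsFiniteMeasure m]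
    {A : ℕ → Set (((Fin N → ℝ) × Ω) × (Fin N → ℝ))} (hA : ∀ n, Apx m (A n)) : Apx m (⋃ n, A n) := by
  have hP : ∀ n, Apx m (partialSups A n) := by
    intro n
    induction n with
    | zero => simpa using hA 0
    | succ n ih => rw [partialSups_add_one]; exact ih.union (hA _)
  have hm : MeasurableSet (⋃ n, A n) := MeasurableSet.iUnion fun n => (hA n).1
  refine ⟨hm, fun η hη => ?_⟩
  have hU : (⋃ n, partialSups A n) = ⋃ n, A n := by
    have := iSup_partialSups_eq A
    simpa only [Set.iSup_eq_iUnion] using this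
  have ht := tendsto_measure_iUnion_atTop (μ := m) (s := fun n => partialSups A n) (partialSups_monotone A)
  rw [hU] at ht
  have h2 : Tendsto (fun n => m ((⋃ n, A n) \ partialSups A n)) atTop (𝓝 0) := by
    have := ENNReal.Tendsto.sub (tendsto_const_nhds (x := m (⋃ n, A n))) ht (Or.inl (measure_ne_top _ _))
    simp only [tsub_self] at this
    refine this.congr fun n => ?_
    rw [measure_sdiff (by rw [← hU]; exact Set.subset_iUnion (fun n => partialSups A n) n) (hP n).1.nullMeasurableSet (measure_ne_top _ _)]
    rfl
  have hh := ENNReal.half_pos hη.ne'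
  obtain ⟨n, hn⟩ := (h2.eventually_le_const hh).exists
  obtain ⟨χ, h1, h2, h3⟩ := (hP n).2 (η/2) hh
  refine ⟨χ, h1, h2, ?_⟩
  calc _ ≤ ∫⁻ p, (‖χ p - (partialSups A n).indicator 1 p‖ₑ + ((⋃ n, A n) \ partialSups A n).indicator 1 p) ∂m := by
          apply lintegral_mono
          intro p
          have hs : partialSups A n ⊆ ⋃ n, A n := by rw [← hU]; exact Set.subset_iUnion (fun n => partialSups A n) n
          by_cases hp : p ∈ partialSups A n
          · have := hs hp
            simp [hp, this]
          · by_cases hq : p ∈ ⋃ n, A n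
            · simp only [hp, hq, Set.mem_sdiff, not_false_eq_true, and_self, Set.indicator_of_mem, Set.indicator_of_notMem, Pi.one_apply]
              calc ‖χ p - 1‖ₑ ≤ 1 := by
                    rw [Real.enorm_eq_ofReal_abs, ← ENNReal.ofReal_one]
                    apply ENNReal.ofReal_le_ofReal
                    have := h2 p
                    rw [abs_le]; constructor <;> linarith [this.1, this.2]
                _ ≤ _ := le_add_self
            · simp [hp, hq]
      _ = (∫⁻ p, ‖χ p - (partialSups A n).indicator 1 p‖ₑ ∂m) + m ((⋃ n, A n) \ partialSups A n) := by
          rw [lintegral_add_left, lintegral_indicator_one (hm.diff (hP n).1)]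
          have := h1.meas
          have := (measurable_one (α := ℝ) (β := ((Fin N → ℝ) × Ω) × (Fin N → ℝ))).indicator (hP n).1
          fun_prop
      _ ≤ η/2 + η/2 := add_le_add h3 hn
      _ = η := ENNReal.add_halves η

/-- the sigma algebra of approximable sets -/
@[reducible] def apxSpace (m : Measure (((Fin N → ℝ) × Ω) × (Fin N → ℝ))) [IsFiniteMeasure m] :
    MeasurableSpace (((Fin N → ℝ) × Ω) × (Fin N → ℝ)) where
  MeasurableSet' := Apx m
  measurableSet_empty := Apx.empty
  measurableSet_compl _ h := h.compl
  measurableSet_iUnion _ h := Apx.iUnion h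
end

section
variable {N : ℕ} {Ω : Type*} [MeasurableSpace Ω]

lemma tend_aux {t : ℝ} (h0 : 0 ≤ t) (h1 : t ≤ 1) :
    Tendsto (fun n : ℕ => 1 - (1 - t)^n) atTop (𝓝 (if t = 0 then 0 else 1)) := by
  split_ifs with h
  · simp [h]
  · have : Tendsto (fun n : ℕ => (1 - t)^n) atTop (𝓝 0) :=
      tendsto_pow_atTop_nhds_zero_of_lt_one (by linarith)
        (by have := lt_of_le_of_ne h0 (Ne.symm h); linarith)
    simpa using this.const_sub 1

lemma pow_aux {t : ℝ} (h0 : 0 ≤ t) (h1 : t ≤ 1) (n : ℕ) : 1 - (1 - t)^n ∈ Set.Icc (0:ℝ) 1 := by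
  have h2 : 0 ≤ (1-t)^n := pow_nonneg (by linarith) n
  have h3 : (1-t)^n ≤ 1 := pow_le_one₀ (by linarith) (by linarith)
  constructor <;> linarith

lemma Adm.pow {a : ((Fin N → ℝ) × Ω) × (Fin N → ℝ) → ℝ} (h : Adm a) (n : ℕ) :
    Adm (fun p => a p ^ n) := by
  induction n with
  | zero => simpa using Adm.const 1
  | succ n ih => simpa [pow_succ] using ih.mul h

lemma Apx.of_fun {m : Measure (((Fin N → ℝ) × Ω) × (Fin N → ℝ))} [IsFiniteMeasure m]
    {A : Set (((Fin N → ℝ) × Ω) × (Fin N → ℝ))} (hA : MeasurableSet A)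
    (χ : ((Fin N → ℝ) × Ω) × (Fin N → ℝ) → ℝ) (h1 : Adm χ)
    (h2 : ∀ p, χ p ∈ Set.Icc (0:ℝ) 1)
    (h3 : ∀ᵐ p ∂m, χ p ≠ 0 ↔ p ∈ A) : Apx m A := by
  refine Apx.of_seq hA (fun n p => 1 - (1 - χ p)^n)
    (fun n => (Adm.const 1).sub (((Adm.const 1).sub h1).pow n))
    (fun n p => pow_aux (h2 p).1 (h2 p).2 n) ?_
  filter_upwards [h3] with p hp
  have := tend_aux (h2 p).1 (h2 p).2
  convert this using 2
  by_cases h : p ∈ A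
  · have := hp.2 h
    simp [h, this]
  · have : χ p = 0 := by by_contra h'; exact h (hp.1 h')
    simp [h, this]

/-- periodic extension -/
def perExt (G : Set (Fin N → ℝ)) : Set (Fin N → ℝ) :=
  ⋃ k : Fin N → ℤ, {y | (y + fun i => (k i : ℝ)) ∈ G ∩ Set.pi Set.univ (fun _ => Set.Ioo (0:ℝ) 1)}

lemma perExt_open {G : Set (Fin N → ℝ)} (hG : IsOpen G) : IsOpen (perExt G) := by
  refine isOpen_iUnion fun k => ?_
  exact (hG.inter (isOpen_set_pi Set.finite_univ fun _ _ => isOpen_Ioo)).preimage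
    (by fun_prop : Continuous fun y : Fin N → ℝ => y + fun i => (k i : ℝ))

lemma perExt_add {G : Set (Fin N → ℝ)} (y : Fin N → ℝ) (k : Fin N → ℤ) :
    (y + fun i => (k i : ℝ)) ∈ perExt G ↔ y ∈ perExt G := by
  simp only [perExt, Set.mem_iUnion, Set.mem_ofPred_eq]
  constructor
  · rintro ⟨l, hl⟩
    refine ⟨k + l, ?_⟩
    convert hl using 1
    ext i; simp [add_assoc]
  · rintro ⟨l, hl⟩
    refine ⟨l - k, ?_⟩
    convert hl using 1
    ext i; simp

lemma perExt_mem {G : Set (Fin N → ℝ)} (y : Fin N → ℝ) (hy : ∀ i, y i ∈ Set.Ioo (0:ℝ) 1) :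
    y ∈ perExt G ↔ y ∈ G := by
  simp only [perExt, Set.mem_iUnion, Set.mem_ofPred_eq]
  constructor
  · rintro ⟨l, hl⟩
    have : l = 0 := by
      ext i
      have h1 := hl.2 i (Set.mem_univ i)
      have h2 := hy i
      simp only [Pi.add_apply, Set.mem_Ioo] at h1 h2
      have h3 : (l i : ℝ) < 1 := by linarith
      have h4 : (-1 : ℝ) < l i := by linarith
      have h3' : l i < 1 := by exact_mod_cast h3
      have h4' : -1 < l i := by exact_mod_cast h4
      simp only [Pi.zero_apply]
      omega
    subst this
    have := hl.1
    convert this using 1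
    ext i; simp
  · intro h
    refine ⟨0, ?_, ?_⟩
    · convert h using 1
      ext i; simp
    · intro i _
      simpa using hy i

lemma perExt_compl_ne (hN : 1 ≤ N) (G : Set (Fin N → ℝ)) : ((perExt G)ᶜ).Nonempty := by
  refine ⟨0, ?_⟩
  simp only [perExt, Set.mem_compl_iff, Set.mem_iUnion, Set.mem_ofPred_eq, not_exists]
  intro l hl
  have h1 := hl.2 ⟨0, hN⟩ (Set.mem_univ _)
  simp only [Pi.add_apply, Set.mem_Ioo, Pi.zero_apply, zero_add] at h1
  have h3' : l ⟨0, hN⟩ < 1 := by exact_mod_cast h1.2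
  have h4' : 0 < l ⟨0, hN⟩ := by exact_mod_cast h1.1
  omega

lemma perExt_infDist (G : Set (Fin N → ℝ)) :
    ZPeriodic fun y => Metric.infDist y (perExt G)ᶜ := by
  intro y k
  have : (fun z : Fin N → ℝ => z + fun i => (k i : ℝ)) '' (perExt G)ᶜ = (perExt G)ᶜ := by
    ext z
    simp only [Set.mem_image, Set.mem_compl_iff]
    constructor
    · rintro ⟨w, hw, rfl⟩
      rwa [perExt_add]
    · intro hz
      refine ⟨z - fun i => (k i : ℝ), ?_, by simp⟩
      rwa [← perExt_add _ k, sub_add_cancel]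
  have hi : Isometry (fun z : Fin N → ℝ => z + fun i => (k i : ℝ)) := isometry_add_right _
  have h2 := Metric.infDist_image hi (x := y) (t := (perExt G)ᶜ)
  rw [this] at h2
  exact h2

lemma apx_all (hN : 1 ≤ N) (m : Measure (((Fin N → ℝ) × Ω) × (Fin N → ℝ))) [IsFiniteMeasure m]
    (hm : ∀ᵐ p ∂m, ∀ i, p.2 i ∈ Set.Ioo (0:ℝ) 1)
    {A : Set (((Fin N → ℝ) × Ω) × (Fin N → ℝ))} (hA : MeasurableSet A) : Apx m A := by
  suffices h : (inferInstance : MeasurableSpace (((Fin N → ℝ) × Ω) × (Fin N → ℝ))) ≤ apxSpace m from h A hA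
  have hx : MeasurableSpace.comap (fun p : ((Fin N → ℝ) × Ω) × (Fin N → ℝ) => p.1.1) inferInstance ≤ apxSpace m := by
    rw [MeasurableSpace.comap_le_iff_le_map, BorelSpace.measurable_eq (α := Fin N → ℝ)]
    refine MeasurableSpace.generateFrom_le fun G (hG : IsOpen G) => ?_
    obtain ⟨φ, h1, h2, h3⟩ := hG.exists_contDiff_support_eq (n := ⊤)
    have hr : ∀ x, φ x ∈ Set.Icc (0:ℝ) 1 := fun x => h3 ⟨x, rfl⟩
    refine Apx.of_fun (measurable_fst.fst hG.measurableSet) (fun p => φ p.1.1) ?_ (fun p => hr _) ?_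
    · refine (Adm.basic φ (fun _ => 1) (fun _ => 1) h2 ⟨1, fun x => ?_⟩
        measurable_const ⟨_, fun _ => le_rfl⟩ continuous_const (fun _ _ => rfl)).congr (by simp)
      rw [abs_of_nonneg (hr x).1]; exact (hr x).2
    · refine ae_of_all _ fun p => ?_
      rw [Set.mem_preimage, ← h1]; rfl
  have hw : MeasurableSpace.comap (fun p : ((Fin N → ℝ) × Ω) × (Fin N → ℝ) => p.1.2) inferInstance ≤ apxSpace m := by
    rw [MeasurableSpace.comap_le_iff_le_map]
    intro F hF
    refine Apx.of_fun (measurable_fst.snd hF) (fun p => F.indicator 1 p.1.2) ?_ (fun p => ?_) ?_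
    · refine (Adm.basic (fun _ => 1) (F.indicator 1) (fun _ => 1) contDiff_const ⟨_, fun _ => le_rfl⟩
        (measurable_one.indicator hF) ⟨1, fun x => ?_⟩ continuous_const (fun _ _ => rfl)).congr (by simp)
      by_cases hx : x ∈ F <;> simp [hx]
    · by_cases hx : p.1.2 ∈ F <;> simp [hx]
    · refine ae_of_all _ fun p => ?_
      by_cases hx : p.1.2 ∈ F <;> simp [hx]
  have hy : MeasurableSpace.comap (fun p : ((Fin N → ℝ) × Ω) × (Fin N → ℝ) => p.2) inferInstance ≤ apxSpace m := by
    rw [MeasurableSpace.comap_le_iff_le_map, BorelSpace.measurable_eq (α := Fin N → ℝ)]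
    refine MeasurableSpace.generateFrom_le fun G (hG : IsOpen G) => ?_
    let g : (Fin N → ℝ) → ℝ := fun y => min 1 (Metric.infDist y (perExt G)ᶜ)
    have hr : ∀ x, g x ∈ Set.Icc (0:ℝ) 1 := fun x => ⟨le_min zero_le_one Metric.infDist_nonneg, min_le_left _ _⟩
    refine Apx.of_fun (measurable_snd hG.measurableSet) (fun p => g p.2) ?_ (fun p => hr _) ?_
    · refine (Adm.basic (fun _ => 1) (fun _ => 1) g contDiff_const ⟨_, fun _ => le_rfl⟩
        measurable_const ⟨_, fun _ => le_rfl⟩ (continuous_const.min (Metric.continuous_infDist_pt _)) ?_).congr (by simp)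
      intro y k
      simp only [g]
      have hpi := perExt_infDist G y k
      simp only at hpi
      rw [hpi]
    · filter_upwards [hm] with p hp
      rw [Set.mem_preimage, ← perExt_mem _ hp]
      have := (perExt_open hG).isClosed_compl.notMem_iff_infDist_pos (perExt_compl_ne hN G) (x := p.2)
      rw [Set.notMem_compl_iff] at this
      rw [this]
      have h0 := Metric.infDist_nonneg (x := p.2) (s := (perExt G)ᶜ)
      simp only [g]
      constructor
      · intro h
        refine lt_of_le_of_ne h0 fun h' => h ?_
        rw [← h']; simp
      · intro h
        exact (lt_min one_pos h).ne'
  refine sup_le ?_ hy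
  have : (MeasurableSpace.comap Prod.fst (Prod.instMeasurableSpace (α := Fin N → ℝ) (β := Ω)) :
     MeasurableSpace (((Fin N → ℝ) × Ω) × (Fin N → ℝ))) ≤ apxSpace m := by
    rw [Prod.instMeasurableSpace, MeasurableSpace.prod, MeasurableSpace.comap_sup, MeasurableSpace.comap_comp, MeasurableSpace.comap_comp]
    exact sup_le hx hw
  exact this

lemma apx_seq (hN : 1 ≤ N) (m : Measure (((Fin N → ℝ) × Ω) × (Fin N → ℝ))) [IsFiniteMeasure m]
    (hm : ∀ᵐ p ∂m, ∀ i, p.2 i ∈ Set.Ioo (0:ℝ) 1)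
    {A : Set (((Fin N → ℝ) × Ω) × (Fin N → ℝ))} (hA : MeasurableSet A) :
    ∃ χ : ℕ → ((Fin N → ℝ) × Ω) × (Fin N → ℝ) → ℝ, (∀ n, Adm (χ n)) ∧
      (∀ n p, χ n p ∈ Set.Icc (0:ℝ) 1) ∧
      ∀ᵐ p ∂m, Tendsto (fun n => χ n p) atTop (𝓝 (A.indicator 1 p)) := by
  have h := (apx_all hN m hm hA).2
  choose χ h1 h2 h3 using fun n : ℕ => h ((n + 1 : ℝ≥0∞)⁻¹) (by simp)
  have ht : Tendsto (fun n => eLpNorm (χ n - A.indicator 1) 1 m) atTop (𝓝 0) := by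
    have h0 : Tendsto (fun n : ℕ => ((n + 1 : ℝ≥0∞)⁻¹)) atTop (𝓝 0) := by
      have := (tendsto_add_atTop_iff_nat 1).2 ENNReal.tendsto_inv_nat_nhds_zero
      simpa using this
    refine tendsto_of_tendsto_of_tendsto_of_le_of_le tendsto_const_nhds h0 (fun _ => zero_le) ?_
    intro n
    change eLpNorm (χ n - A.indicator 1) 1 m ≤ ((n:ℝ≥0∞)+1)⁻¹
    rw [eLpNorm_one_eq_lintegral_enorm]
    exact h3 n
  have him : Measurable (A.indicator (1 : ((Fin N → ℝ) × Ω) × (Fin N → ℝ) → ℝ)) := measurable_one.indicator hA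
  have := tendstoInMeasure_of_tendsto_eLpNorm one_ne_zero (fun n => (h1 n).meas.aestronglyMeasurable)
    him.aestronglyMeasurable ht
  obtain ⟨ns, hns, h4⟩ := this.exists_seq_tendsto_ae
  exact ⟨fun n => χ (ns n), fun n => h1 _, fun n => h2 _, h4⟩
end

structure GoodF {N : ℕ} {Ω : Type*} [MeasurableSpace Ω]
    (F : (Fin N → ℝ) → Ω → (Fin N → ℝ) → (Fin N → ℝ) → ℝ) : Prop where
  meas : ∀ x y l, Measurable fun ω => F x ω y l
  cont : ∀ ω, Continuous fun q : (Fin N → ℝ) × (Fin N → ℝ) × (Fin N → ℝ) => F q.1 ω q.2.1 q.2.2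
  per : ∀ x ω l, ZPeriodic fun y => F x ω y l
  conv : ∀ x ω y, ConvexOn ℝ Set.univ (F x ω y)
  nonneg : ∀ x ω y l, 0 ≤ F x ω y l
  zero_le : ∃ c, ∀ x ω y, F x ω y 0 ≤ c
  sup : ∀ M : ℝ, ∃ C : ℝ, ∀ x ω y l, M * ‖l‖ - C ≤ F x ω y l

section
variable {N : ℕ} {Ω : Type*} [MeasurableSpace Ω]

lemma dot_le (a b : Fin N → ℝ) : |a ⬝ᵥ b| ≤ N * (‖a‖ * ‖b‖) := by
  unfold dotProduct
  refine (Finset.abs_sum_le_sum_abs _ _).trans ?_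
  have : ∀ i ∈ (Finset.univ : Finset (Fin N)), |a i * b i| ≤ ‖a‖ * ‖b‖ := fun i _ => by
    rw [abs_mul]
    exact mul_le_mul (norm_le_pi_norm a i) (norm_le_pi_norm b i) (abs_nonneg _) (norm_nonneg _)
  simpa using Finset.sum_le_card_nsmul _ _ _ this

lemma GoodF.radius {F : (Fin N → ℝ) → Ω → (Fin N → ℝ) → (Fin N → ℝ) → ℝ} (hF : GoodF F) (S : ℝ) :
    ∃ R : ℝ, 0 ≤ R ∧ ∀ ξ : Fin N → ℝ, ‖ξ‖ ≤ S → ∀ x ω y l, R < ‖l‖ →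
      ξ ⬝ᵥ l - F x ω y l ≤ - F x ω y 0 := by
  obtain ⟨c, hc⟩ := hF.zero_le
  obtain ⟨C, hC⟩ := hF.sup (N * S + 1)
  refine ⟨max 0 (C + c), le_max_left _ _, fun ξ hξ x ω y l hl => ?_⟩
  have h1 := hC x ω y l
  have h2 := hc x ω y
  have h3 := (le_abs_self _).trans (dot_le ξ l)
  have h4 : (N:ℝ) * (‖ξ‖ * ‖l‖) ≤ N * (S * ‖l‖) := by gcongr
  have h5 := (le_max_right 0 (C + c)).trans_lt hl
  nlinarith

lemma GoodF.bddAbove {F : (Fin N → ℝ) → Ω → (Fin N → ℝ) → (Fin N → ℝ) → ℝ} (hF : GoodF F)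
    (ξ : Fin N → ℝ) : ∃ B : ℝ, ∀ x ω y l, ξ ⬝ᵥ l - F x ω y l ≤ B := by
  obtain ⟨C, hC⟩ := hF.sup (N * ‖ξ‖)
  refine ⟨C, fun x ω y l => ?_⟩
  have h1 := hC x ω y l
  have h3 := (le_abs_self _).trans (dot_le ξ l)
  nlinarith

noncomputable def cj (F : (Fin N → ℝ) → Ω → (Fin N → ℝ) → (Fin N → ℝ) → ℝ) (ξ : Fin N → ℝ)
    (p : ((Fin N → ℝ) × Ω) × (Fin N → ℝ)) : ℝ :=
  ⨆ i : ℕ, (ξ ⬝ᵥ TopologicalSpace.denseSeq (Fin N → ℝ) i -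
    F p.1.1 p.1.2 p.2 (TopologicalSpace.denseSeq (Fin N → ℝ) i))

lemma dot_cont (ξ : Fin N → ℝ) : Continuous fun l => ξ ⬝ᵥ l := by
  unfold dotProduct; fun_prop

lemma GoodF.contl {F : (Fin N → ℝ) → Ω → (Fin N → ℝ) → (Fin N → ℝ) → ℝ} (hF : GoodF F) (x ω y) :
    Continuous (F x ω y) :=
  (hF.cont ω).comp (by fun_prop : Continuous fun l => (x, y, l))

lemma cj_ge {F : (Fin N → ℝ) → Ω → (Fin N → ℝ) → (Fin N → ℝ) → ℝ} (hF : GoodF F) (ξ : Fin N → ℝ)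
    (p : ((Fin N → ℝ) × Ω) × (Fin N → ℝ)) (l) : ξ ⬝ᵥ l - F p.1.1 p.1.2 p.2 l ≤ cj F ξ p := by
  obtain ⟨B, hB⟩ := hF.bddAbove ξ
  have hcl : IsClosed {l | ξ ⬝ᵥ l - F p.1.1 p.1.2 p.2 l ≤ cj F ξ p} :=
    isClosed_le ((dot_cont ξ).sub (hF.contl _ _ _)) continuous_const
  have : Set.range (TopologicalSpace.denseSeq (Fin N → ℝ)) ⊆ {l | ξ ⬝ᵥ l - F p.1.1 p.1.2 p.2 l ≤ cj F ξ p} := by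
    rintro _ ⟨i, rfl⟩
    exact le_ciSup (f := fun i : ℕ => (ξ ⬝ᵥ TopologicalSpace.denseSeq (Fin N → ℝ) i -
    F p.1.1 p.1.2 p.2 (TopologicalSpace.denseSeq (Fin N → ℝ) i))) ⟨B, by rintro _ ⟨i, rfl⟩; exact hB _ _ _ _⟩ i
  have h2 := hcl.closure_subset_iff.2 this
  rw [(TopologicalSpace.denseRange_denseSeq (Fin N → ℝ)).closure_range] at h2
  exact h2 (Set.mem_univ l)

lemma cj_le {F : (Fin N → ℝ) → Ω → (Fin N → ℝ) → (Fin N → ℝ) → ℝ} (ξ : Fin N → ℝ)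
    (p : ((Fin N → ℝ) × Ω) × (Fin N → ℝ)) (B : ℝ) (h : ∀ l, ξ ⬝ᵥ l - F p.1.1 p.1.2 p.2 l ≤ B) :
    cj F ξ p ≤ B := ciSup_le fun _ => h _

lemma cj_cont {F : (Fin N → ℝ) → Ω → (Fin N → ℝ) → (Fin N → ℝ) → ℝ} (hF : GoodF F) (ξ : Fin N → ℝ)
    (ω : Ω) : Continuous fun q : (Fin N → ℝ) × (Fin N → ℝ) => cj F ξ ((q.1, ω), q.2) := by
  obtain ⟨R, hR0, hR⟩ := hF.radius ‖ξ‖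
  have hK := isCompact_closedBall (0 : Fin N → ℝ) R
  let G : (Fin N → ℝ) × (Fin N → ℝ) → (Fin N → ℝ) → ℝ := fun q l => ξ ⬝ᵥ l - F q.1 ω q.2 l
  have hG : Continuous ↿G := by
    refine Continuous.sub ((dot_cont ξ).comp continuous_snd) ?_
    exact (hF.cont ω).comp (by fun_prop : Continuous fun r : ((Fin N → ℝ) × (Fin N → ℝ)) × (Fin N → ℝ) => (r.1.1, r.1.2, r.2))
  have := hK.continuous_sSup hG
  convert this using 2 with q
  obtain ⟨B, hB⟩ := hF.bddAbove ξ
  have hbd : BddAbove (G q '' Metric.closedBall 0 R) := ⟨B, by rintro _ ⟨l, _, rfl⟩; exact hB _ _ _ _⟩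
  apply le_antisymm
  · refine cj_le _ _ _ fun l => ?_
    by_cases hl : ‖l‖ ≤ R
    · exact le_csSup hbd ⟨l, by simpa using hl, rfl⟩
    · refine (hR ξ le_rfl q.1 ω q.2 l (not_le.1 hl)).trans ?_
      exact le_csSup hbd ⟨0, by simpa using hR0, by simp [G]⟩
  · refine csSup_le ⟨_, 0, by simpa using hR0, rfl⟩ ?_
    rintro _ ⟨l, _, rfl⟩
    exact cj_ge hF ξ ((q.1, ω), q.2) l

lemma cj_meas {F : (Fin N → ℝ) → Ω → (Fin N → ℝ) → (Fin N → ℝ) → ℝ} (hF : GoodF F) (ξ : Fin N → ℝ) :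
    Measurable (cj F ξ) := by
  have h1 : ∀ q : (Fin N → ℝ) × (Fin N → ℝ), Measurable fun ω => cj F ξ ((q.1, ω), q.2) := fun q => by
    refine Measurable.iSup fun i => ?_
    exact measurable_const.sub (hF.meas _ _ _)
  have := measurable_uncurry_of_continuous_of_measurable (u := fun (q : (Fin N → ℝ) × (Fin N → ℝ)) (ω : Ω) => cj F ξ ((q.1, ω), q.2)) (cj_cont hF ξ) h1
  exact this.comp (by fun_prop : Measurable fun p : ((Fin N → ℝ) × Ω) × (Fin N → ℝ) => ((p.1.1, p.2), p.1.2))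

lemma cj_bdd {F : (Fin N → ℝ) → Ω → (Fin N → ℝ) → (Fin N → ℝ) → ℝ} (hF : GoodF F) (ξ : Fin N → ℝ) :
    ∃ B, ∀ p, |cj F ξ p| ≤ B := by
  obtain ⟨B, hB⟩ := hF.bddAbove ξ
  obtain ⟨c, hc⟩ := hF.zero_le
  refine ⟨max B c, fun p => abs_le.2 ⟨?_, ?_⟩⟩
  · have := cj_ge hF ξ p 0
    rw [dotProduct_zero, zero_sub] at this
    have h2 := hc p.1.1 p.1.2 p.2
    have := le_max_right B c
    linarith
  · exact (cj_le _ _ _ (hB _ _ _)).trans (le_max_left _ _)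

lemma cj_per {F : (Fin N → ℝ) → Ω → (Fin N → ℝ) → (Fin N → ℝ) → ℝ} (hF : GoodF F) (ξ : Fin N → ℝ) (x ω) :
    ZPeriodic fun y => cj F ξ ((x, ω), y) := by
  intro y k
  unfold cj
  refine iSup_congr fun i => ?_
  have := hF.per x ω (TopologicalSpace.denseSeq (Fin N → ℝ) i) y k
  simp only at this ⊢
  rw [this]

lemma cj_dense {F : (Fin N → ℝ) → Ω → (Fin N → ℝ) → (Fin N → ℝ) → ℝ} (hF : GoodF F)
    (p : ((Fin N → ℝ) × Ω) × (Fin N → ℝ)) (l₀ : Fin N → ℝ) (a : ℝ) (ha : a < F p.1.1 p.1.2 p.2 l₀) :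
    ∃ n : ℕ, a < TopologicalSpace.denseSeq (Fin N → ℝ) n ⬝ᵥ l₀ -
      cj F (TopologicalSpace.denseSeq (Fin N → ℝ) n) p := by
  obtain ⟨a', ha', ha''⟩ := exists_between ha
  obtain ⟨L, c, hL, hLa⟩ := (ConvexOn.exists_affine_le_of_lt (𝕜 := ℝ) (Set.mem_univ l₀) ha'' isClosed_univ
    ((hF.contl _ _ _).lowerSemicontinuous.lowerSemicontinuousOn _) (hF.conv p.1.1 p.1.2 p.2))
  let ξ : Fin N → ℝ := fun i => L (Pi.single i 1)
  have hLξ : ∀ l, L l = ξ ⬝ᵥ l := fun l => by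
    conv_lhs => rw [pi_eq_sum_univ' l]
    simp [ξ, dotProduct, mul_comm]
  have hle : ∀ l, ξ ⬝ᵥ l + c ≤ F p.1.1 p.1.2 p.2 l := fun l => by
    have := hL ⟨l, Set.mem_univ l⟩
    simpa [hLξ] using this
  have heq : ξ ⬝ᵥ l₀ + c = a' := by simpa [hLξ] using hLa
  obtain ⟨R, hR0, hR⟩ := hF.radius (‖ξ‖ + 1)
  obtain ⟨ρ, hρ, hρ1, hρ2⟩ : ∃ ρ : ℝ, 0 < ρ ∧ ρ ≤ 1 ∧ ρ * (N * (R + ‖l₀‖)) < a' - a := by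
    have hpos : 0 < N * (R + ‖l₀‖) + 1 := by positivity
    refine ⟨min 1 ((a' - a) / (N * (R + ‖l₀‖) + 1)), lt_min one_pos (div_pos (sub_pos.2 ha') hpos), min_le_left _ _, ?_⟩
    have h0 : 0 ≤ N * (R + ‖l₀‖) := by positivity
    calc _ ≤ (a' - a) / (N * (R + ‖l₀‖) + 1) * (N * (R + ‖l₀‖)) := by gcongr; exact min_le_right _ _
      _ < (a' - a) / (N * (R + ‖l₀‖) + 1) * (N * (R + ‖l₀‖) + 1) := by
        have := div_pos (sub_pos.2 ha') hpos
        gcongr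
        linarith
      _ = _ := div_mul_cancel₀ _ hpos.ne'
  obtain ⟨n, hn⟩ := (TopologicalSpace.denseRange_denseSeq (Fin N → ℝ)).exists_dist_lt ξ hρ
  refine ⟨n, ?_⟩
  set ζ := TopologicalSpace.denseSeq (Fin N → ℝ) n
  have hζ : ‖ζ - ξ‖ ≤ ρ := by rw [← dist_eq_norm, dist_comm]; exact hn.le
  have hdiff : ∀ l, |ζ ⬝ᵥ l - ξ ⬝ᵥ l| ≤ ρ * (N * ‖l‖) := fun l => by
    rw [← sub_dotProduct]
    refine (dot_le _ _).trans ?_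
    have : ‖ζ - ξ‖ * ‖l‖ ≤ ρ * ‖l‖ := by gcongr
    calc _ ≤ (N:ℝ) * (ρ * ‖l‖) := by gcongr
      _ = _ := by ring
  have hζn : ‖ζ‖ ≤ ‖ξ‖ + 1 := by
    have := norm_le_norm_add_norm_sub' ζ ξ
    linarith
  have hcj : cj F ζ p ≤ -c + ρ * (N * R) := by
    refine cj_le _ _ _ fun l => ?_
    by_cases hl : ‖l‖ ≤ R
    · have h1 := (abs_le.1 (hdiff l)).2
      have h2 : ρ * (N * ‖l‖) ≤ ρ * (N * R) := by gcongr
      have h3 := hle l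
      linarith
    · have h1 := hR ζ hζn p.1.1 p.1.2 p.2 l (not_le.1 hl)
      have h2 := hle 0
      rw [dotProduct_zero] at h2
      have : 0 ≤ ρ * (N * R) := by positivity
      linarith
  have h1 := (abs_le.1 (hdiff l₀)).1
  nlinarith

end

section
variable {N : ℕ} {Ω : Type*} [MeasurableSpace Ω]

noncomputable def sc (T : (Fin N → ℝ) → Ω → Ω) (ε : ℝ) (p : (Fin N → ℝ) × Ω) : ((Fin N → ℝ) × Ω) × (Fin N → ℝ) :=
  ((p.1, T (ε⁻¹ • p.1) p.2), (ε ^ 2)⁻¹ • p.1)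

lemma T_meas {μ : Measure Ω} {T : (Fin N → ℝ) → Ω → Ω} (hT : IsDynSys μ T) (ε : ℝ) :
    Measurable fun p : (Fin N → ℝ) × Ω => T (ε⁻¹ • p.1) p.2 :=
  hT.2.2.2.comp (by fun_prop : Measurable fun p : (Fin N → ℝ) × Ω => (ε⁻¹ • p.1, p.2))

lemma sc_meas {μ : Measure Ω} {T : (Fin N → ℝ) → Ω → Ω} (hT : IsDynSys μ T) (ε : ℝ) :
    Measurable (sc T ε) := by
  have := T_meas hT ε
  exact (measurable_fst.prodMk this).prodMk (by fun_prop)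

lemma S_mp {μ : Measure Ω} [IsProbabilityMeasure μ] {T : (Fin N → ℝ) → Ω → Ω} (hT : IsDynSys μ T) (ε : ℝ)
    (Q : Set (Fin N → ℝ)) :
    MeasurePreserving (fun p : (Fin N → ℝ) × Ω => (p.1, T (ε⁻¹ • p.1) p.2))
      ((volume.restrict Q).prod μ) ((volume.restrict Q).prod μ) :=
  MeasurePreserving.skew_product (MeasurePreserving.id _) (T_meas hT ε)
    (Filter.Eventually.of_forall fun x => (hT.2.2.1 _).map_eq)

lemma osc {μ : Measure Ω} [IsProbabilityMeasure μ] {T : (Fin N → ℝ) → Ω → Ω} (hT : IsDynSys μ T)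
    {Q : Set (Fin N → ℝ)} (hQb : Bornology.IsBounded Q) (hQm : MeasurableSet Q)
    (a : ((Fin N → ℝ) × Ω) × (Fin N → ℝ) → ℝ)
    (ham : Measurable a) (B : ℝ) (hB : ∀ p, |a p| ≤ B)
    (hac : ∀ ω, Continuous fun q : (Fin N → ℝ) × (Fin N → ℝ) => a ((q.1, ω), q.2))
    (hap : ∀ x ω, ZPeriodic fun y => a ((x, ω), y))
    (hz : ∀ x, x ∉ Q → ∀ ω y, a ((x, ω), y) = 0)
    {ε : ℕ → ℝ} (hε : ∀ k, ε k ∈ Set.Ioc (0 : ℝ) 1) (hε0 : Tendsto ε atTop (𝓝 0)) :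
    Tendsto (fun k => ∫ p, a (sc T (ε k) p) ∂((volume.restrict Q).prod μ)) atTop
      (𝓝 (∫ p, a p ∂(((volume.restrict Q).prod μ).prod (volume.restrict (Ycube N))))) := by
  have hfin : IsFiniteMeasure ((volume : Measure (Fin N → ℝ)).restrict Q) :=
    ⟨by simpa using hQb.measure_lt_top⟩
  have hQv : volume Q < ⊤ := hQb.measure_lt_top
  obtain ⟨r, hr⟩ := hQb.exists_norm_le
  have e1 : ∀ k, ∫ p, a (sc T (ε k) p) ∂((volume.restrict Q).prod μ) =
      ∫ ω, (∫ x in Q, a ((x, ω), ((ε k) ^ 2)⁻¹ • x)) ∂μ := by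
    intro k
    have hm : Measurable fun p : (Fin N → ℝ) × Ω => a (p, ((ε k) ^ 2)⁻¹ • p.1) :=
      ham.comp (by fun_prop)
    have h1 := integral_map (μ := (volume.restrict Q).prod μ) (S_mp hT (ε k) Q).measurable.aemeasurable
      (f := fun p : (Fin N → ℝ) × Ω => a (p, ((ε k) ^ 2)⁻¹ • p.1)) hm.aestronglyMeasurable
    rw [(S_mp hT (ε k) Q).map_eq] at h1
    rw [show (∫ p, a (sc T (ε k) p) ∂((volume.restrict Q).prod μ)) = _ from h1.symm]
    rw [integral_prod_symm]
    exact Integrable.of_bound hm.aestronglyMeasurable B (Eventually.of_forall fun p => hB _)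
  have e2 : ∫ p, a p ∂(((volume.restrict Q).prod μ).prod (volume.restrict (Ycube N))) =
      ∫ ω, (∫ x in Q, ∫ y in Ycube N, a ((x, ω), y)) ∂μ := by
    have hi : Integrable a (((volume.restrict Q).prod μ).prod (volume.restrict (Ycube N))) :=
      Integrable.of_bound ham.aestronglyMeasurable B (Eventually.of_forall fun p => hB _)
    rw [integral_prod _ hi, integral_prod_symm _ hi.integral_prod_left]
  simp_rw [e1, e2]
  have hbd : ∀ (k : ℕ) ω, ‖∫ x in Q, a ((x, ω), ((ε k) ^ 2)⁻¹ • x)‖ ≤ B * volume.real Q := fun k ω =>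
    norm_setIntegral_le_of_norm_le_const hQv (fun x _ => hB _)
  refine tendsto_integral_of_dominated_convergence (fun _ => B * volume.real Q) ?_ (integrable_const _)
    (fun k => Eventually.of_forall (hbd k)) (Eventually.of_forall fun ω => ?_)
  · intro k
    have hm : Measurable fun p : Ω × (Fin N → ℝ) => a ((p.2, p.1), ((ε k) ^ 2)⁻¹ • p.2) :=
      ham.comp (by fun_prop)
    exact (hm.stronglyMeasurable.integral_prod_right' (ν := volume.restrict Q)).aestronglyMeasurable
  · have := avg (fun x y => a ((x, ω), y)) (hac ω) (fun x => hap x ω) B r (fun x y => hB _)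
      (fun x hx y => hz x (fun h => (hr x h).not_gt hx) ω y) (fun k => ε k ^ 2)
      (fun k => ⟨pow_pos (hε k).1 _, pow_le_one₀ (hε k).1.le (hε k).2⟩) (by simpa using hε0.pow 2)
    have e3 : ∀ k, ∫ x in Q, a ((x, ω), ((ε k) ^ 2)⁻¹ • x) = ∫ x, a ((x, ω), ((ε k) ^ 2)⁻¹ • x) := fun k =>
      setIntegral_eq_integral_of_forall_compl_eq_zero fun x hx => hz x hx _ _
    have e4 : ∫ x in Q, ∫ y in Ycube N, a ((x, ω), y) = ∫ x, ∫ y in Ycube N, a ((x, ω), y) :=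
      setIntegral_eq_integral_of_forall_compl_eq_zero fun x hx => by simp [hz x hx]
    simp_rw [e3, e4]
    exact this

lemma cutoff {Q : Set (Fin N → ℝ)} (hN : 1 ≤ N) (hQo : IsOpen Q) (hQb : Bornology.IsBounded Q) :
    ∃ κ : ℕ → (Fin N → ℝ) → ℝ, (∀ n, ContDiff ℝ (⊤ : ℕ∞) (κ n)) ∧ (∀ n, HasCompactSupport (κ n)) ∧
      (∀ n, tsupport (κ n) ⊆ Q) ∧ (∀ n x, κ n x ∈ Set.Icc (0:ℝ) 1) ∧
      ∀ x ∈ Q, Tendsto (fun n => κ n x) atTop (𝓝 1) := by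
  have hne : (Qᶜ).Nonempty := by
    rw [Set.nonempty_compl]
    rintro rfl
    have : Nonempty (Fin N) := ⟨⟨0, hN⟩⟩
    exact NormedSpace.unbounded_univ ℝ (Fin N → ℝ) hQb
  have hc : Continuous fun x : Fin N → ℝ => Metric.infDist x Qᶜ := Metric.continuous_infDist_pt _
  have key : ∀ n : ℕ, ∃ κ : (Fin N → ℝ) → ℝ, ContDiff ℝ (⊤ : ℕ∞) κ ∧ HasCompactSupport κ ∧ tsupport κ ⊆ Q ∧
      (∀ x, κ x ∈ Set.Icc (0:ℝ) 1) ∧ ∀ x, 2 / ((n:ℝ)+1) ≤ Metric.infDist x Qᶜ → κ x = 1 := by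
    intro n
    have h0 : 0 < 1 / ((n:ℝ)+1) := by positivity
    obtain ⟨f, hf, hfr, hfs, hf1⟩ := exists_contMDiff_support_eq_eq_one_iff (modelWithCornersSelf ℝ (Fin N → ℝ)) (n := (⊤ : ℕ∞))
      (s := {x | 1 / ((n:ℝ)+1) < Metric.infDist x Qᶜ}) (t := {x | 2 / ((n:ℝ)+1) ≤ Metric.infDist x Qᶜ})
      (isOpen_lt continuous_const hc) (isClosed_le continuous_const hc)
      (fun x hx => lt_of_lt_of_le (by rw [div_lt_div_iff_of_pos_right (by positivity)]; norm_num) (show 2 / ((n:ℝ)+1) ≤ Metric.infDist x Qᶜ from hx))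
    have hts : tsupport f ⊆ Q := by
      have h1 : tsupport f ⊆ {x | 1 / ((n:ℝ)+1) ≤ Metric.infDist x Qᶜ} := by
        refine closure_minimal ?_ (isClosed_le continuous_const hc)
        rw [hfs]
        exact fun x hx => le_of_lt (show 1 / ((n:ℝ)+1) < Metric.infDist x Qᶜ from hx)
      refine h1.trans fun x hx => ?_
      by_contra hxQ
      have := Metric.infDist_zero_of_mem (show x ∈ Qᶜ from hxQ)
      have hx' : 1 / ((n:ℝ)+1) ≤ Metric.infDist x Qᶜ := hx
      linarith
    refine ⟨f, hf.contDiff, ?_, hts, fun x => hfr ⟨x, rfl⟩, fun x hx => (hf1 x).1 hx⟩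
    exact (hQb.isCompact_closure).of_isClosed_subset (isClosed_tsupport f) (hts.trans subset_closure)
  choose κ h1 h2 h3 h4 h5 using key
  refine ⟨κ, h1, h2, h3, h4, fun x hx => ?_⟩
  have hpos : 0 < Metric.infDist x Qᶜ := by
    rw [← (hQo.isClosed_compl).notMem_iff_infDist_pos hne]
    simpa using hx
  refine tendsto_const_nhds.congr' ?_
  have ht : Tendsto (fun n : ℕ => 2 / ((n:ℝ)+1)) atTop (𝓝 0) := by
    have := (tendsto_one_div_add_atTop_nhds_zero_nat (𝕜 := ℝ)).const_mul 2
    simpa [div_eq_mul_inv] using this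
  filter_upwards [ht.eventually_le_const hpos] with n hn
  exact (h5 n x hn).symm

lemma lin {μ : Measure Ω} [IsProbabilityMeasure μ] {T : (Fin N → ℝ) → Ω → Ω} (hT : IsDynSys μ T)
    {Q : Set (Fin N → ℝ)} {ε : ℕ → ℝ}
    {D : ℕ → (Fin N → ℝ) → Ω → ℝ} {W : (Fin N → ℝ) → Ω → (Fin N → ℝ) → ℝ}
    (hD : ∀ k, Integrable (fun p : (Fin N → ℝ) × Ω => D k p.1 p.2) ((volume.restrict Q).prod μ))
    (hW : Integrable (fun p : ((Fin N → ℝ) × Ω) × (Fin N → ℝ) => W p.1.1 p.1.2 p.2)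
      (((volume.restrict Q).prod μ).prod (volume.restrict (Ycube N))))
    (hc : WeakStoch2Scale μ T Q ε D W)
    (κ : (Fin N → ℝ) → ℝ) (hκ : ContDiff ℝ (⊤ : ℕ∞) κ) (hκc : HasCompactSupport κ) (hκs : tsupport κ ⊆ Q)
    {θ : ((Fin N → ℝ) × Ω) × (Fin N → ℝ) → ℝ} (hθ : Adm θ) :
    Tendsto (fun k => ∫ p, κ p.1 * θ (sc T (ε k) p) * D k p.1 p.2 ∂((volume.restrict Q).prod μ)) atTop
      (𝓝 (∫ p, κ p.1.1 * θ p * W p.1.1 p.1.2 p.2 ∂(((volume.restrict Q).prod μ).prod (volume.restrict (Ycube N))))) := by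
  obtain ⟨K, hK⟩ := hκ.continuous.bounded_above_of_compact_support hκc
  have hκm := hκ.continuous.measurable
  have i1 : ∀ {θ : ((Fin N → ℝ) × Ω) × (Fin N → ℝ) → ℝ}, Adm θ → ∀ k, Integrable (fun p => κ p.1 * θ (sc T (ε k) p) * D k p.1 p.2) ((volume.restrict Q).prod μ) := by
    intro θ hθ k
    obtain ⟨C, hC⟩ := hθ.bdd
    refine (hD k).bdd_mul (c := K * C) ?_ (Eventually.of_forall fun p => ?_)
    · have := hθ.meas.comp (sc_meas hT (ε k))
      exact ((hκm.comp measurable_fst).mul this).aestronglyMeasurable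
    · rw [norm_mul]
      exact mul_le_mul (hK _) (hC _) (norm_nonneg _) ((norm_nonneg _).trans (hK 0))
  have i2 : ∀ {θ : ((Fin N → ℝ) × Ω) × (Fin N → ℝ) → ℝ}, Adm θ → Integrable (fun p => κ p.1.1 * θ p * W p.1.1 p.1.2 p.2) (((volume.restrict Q).prod μ).prod (volume.restrict (Ycube N))) := by
    intro θ hθ
    obtain ⟨C, hC⟩ := hθ.bdd
    refine hW.bdd_mul (c := K * C) ?_ (Eventually.of_forall fun p => ?_)
    · exact ((hκm.comp (by fun_prop)).mul hθ.meas).aestronglyMeasurable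
    · rw [norm_mul]
      exact mul_le_mul (hK _) (hC _) (norm_nonneg _) ((norm_nonneg _).trans (hK 0))
  induction hθ with
  | basic φ ψ g hφ hφb hψ hψb hg hgp =>
    have ha := Adm.basic φ ψ g hφ hφb hψ hψb hg hgp
    have := hc (fun x => κ x * φ x) (hκ.mul hφ) hκc.mul_right
      ((tsupport_mul_subset_left).trans hκs) ψ hψ hψb g hg hgp
    convert this using 2 with k
    · rw [integral_prod _ (i1 ha k)]
      simp only [sc]
      congr 1; ext x; congr 1; ext ω; ring
    · rw [integral_prod _ (i2 ha), integral_prod _ (i2 ha).integral_prod_left]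
      congr 1; ext x; congr 1; ext ω; congr 1; ext y; ring
  | add a b ha hb iha ihb =>
    convert iha.add ihb using 2 with k
    · rw [← integral_add (i1 ha k) (i1 hb k)]
      congr 1; ext p; ring
    · rw [← integral_add (i2 ha) (i2 hb)]
      congr 1; ext p; ring

end

section
variable {N : ℕ} {Ω : Type*} [MeasurableSpace Ω]

noncomputable abbrev nuY (Q : Set (Fin N → ℝ)) (μ : Measure Ω) : Measure (((Fin N → ℝ) × Ω) × (Fin N → ℝ)) :=
  ((volume.restrict Q).prod μ).prod (volume.restrict (Ycube N))

lemma nuY_ae (Q : Set (Fin N → ℝ)) (hQm : MeasurableSet Q) (μ : Measure Ω) [IsProbabilityMeasure μ] :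
    ∀ᵐ p ∂(nuY Q μ), p.1.1 ∈ Q := by
  have h1 : ∀ᵐ x ∂((volume : Measure (Fin N → ℝ)).restrict Q), x ∈ Q := ae_restrict_mem hQm
  have h2 := (Measure.quasiMeasurePreserving_fst (μ := volume.restrict Q) (ν := μ)).ae h1
  exact (Measure.quasiMeasurePreserving_fst (μ := (volume.restrict Q).prod μ) (ν := volume.restrict (Ycube N))).ae h2

lemma nuY_ae' (Q : Set (Fin N → ℝ)) (μ : Measure Ω) [IsProbabilityMeasure μ] :
    ∀ᵐ p ∂(nuY Q μ), ∀ i, p.2 i ∈ Set.Ioo (0:ℝ) 1 := by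
  have h0 : Set.pi Set.univ (fun _ : Fin N => Set.Ioo (0:ℝ) 1) =ᵐ[volume] Ycube N := by
    have := Measure.univ_pi_Ioo_ae_eq_Icc (μ := fun _ : Fin N => (volume : Measure ℝ)) (f := fun _ => 0) (g := fun _ => 1)
    exact this
  have h1 : ∀ᵐ y ∂((volume : Measure (Fin N → ℝ)).restrict (Ycube N)), ∀ i, y i ∈ Set.Ioo (0:ℝ) 1 := by
    rw [← Measure.restrict_congr_set h0]
    have : MeasurableSet (Set.pi Set.univ (fun _ : Fin N => Set.Ioo (0:ℝ) 1)) :=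
      MeasurableSet.univ_pi fun _ => measurableSet_Ioo
    filter_upwards [ae_restrict_mem this] with y hy i
    exact hy i (Set.mem_univ i)
  exact (Measure.quasiMeasurePreserving_snd (μ := (volume.restrict Q).prod μ) (ν := volume.restrict (Ycube N))).ae h1

def QQ (T : (Fin N → ℝ) → Ω → Ω) (ε : ℕ → ℝ) (Q : Set (Fin N → ℝ)) (μ : Measure Ω) (G : ℕ → (Fin N → ℝ) × Ω → ℝ)
    (q : ((Fin N → ℝ) × Ω) × (Fin N → ℝ) → ℝ) : Prop :=
  Integrable q (nuY Q μ) ∧ Measurable q ∧ ∀ θ : ((Fin N → ℝ) × Ω) × (Fin N → ℝ) → ℝ, Adm θ → (∀ p, 0 ≤ θ p) →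
    ∀ η > 0, ∀ᶠ k in atTop, ∫ p, θ p * q p ∂(nuY Q μ) - η ≤
      ∫ p, θ (sc T (ε k) p) * G k p ∂((volume.restrict Q).prod μ)

lemma qq_max (hN : 1 ≤ N) {T : (Fin N → ℝ) → Ω → Ω} {μ : Measure Ω} [IsProbabilityMeasure μ] (hT : IsDynSys μ T)
    {ε : ℕ → ℝ} {Q : Set (Fin N → ℝ)} (hQb : Bornology.IsBounded Q)
    {G : ℕ → (Fin N → ℝ) × Ω → ℝ} (hG : ∀ k, Integrable (G k) ((volume.restrict Q).prod μ))
    {q₁ q₂ : ((Fin N → ℝ) × Ω) × (Fin N → ℝ) → ℝ} (h1 : QQ T ε Q μ G q₁) (h2 : QQ T ε Q μ G q₂) :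
    QQ T ε Q μ G (fun p => max (q₁ p) (q₂ p)) := by
  have hfin : IsFiniteMeasure ((volume : Measure (Fin N → ℝ)).restrict Q) :=
    ⟨by simpa using hQb.measure_lt_top⟩
  refine ⟨h1.1.sup h2.1, h1.2.1.max h2.2.1, fun θ hθ hθ0 η hη => ?_⟩
  have hA : MeasurableSet {p | q₂ p < q₁ p} := measurableSet_lt h2.2.1 h1.2.1
  obtain ⟨χ, hχ, hχ1, hχt⟩ := apx_seq hN (nuY Q μ) (nuY_ae' Q μ) hA
  obtain ⟨C, hC⟩ := hθ.bdd
  have hχc : ∀ n, Adm (fun p => 1 - χ n p) := fun n => (Adm.const 1).sub (hχ n)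
  have int1 : ∀ {a q : ((Fin N → ℝ) × Ω) × (Fin N → ℝ) → ℝ}, Adm a → Integrable q (nuY Q μ) →
      Integrable (fun p => a p * q p) (nuY Q μ) := fun {a q} ha hq => by
    obtain ⟨c, hc⟩ := ha.bdd
    exact hq.bdd_mul ha.meas.aestronglyMeasurable (Eventually.of_forall hc)
  have int2 : ∀ {a : ((Fin N → ℝ) × Ω) × (Fin N → ℝ) → ℝ}, Adm a → ∀ k,
      Integrable (fun p => a (sc T (ε k) p) * G k p) ((volume.restrict Q).prod μ) := fun {a} ha k => by
    obtain ⟨c, hc⟩ := ha.bdd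
    exact (hG k).bdd_mul (ha.meas.comp (sc_meas hT _)).aestronglyMeasurable (Eventually.of_forall fun p => hc _)
  have lim : Tendsto (fun n => ∫ p, (θ p * χ n p) * q₁ p + (θ p * (1 - χ n p)) * q₂ p ∂(nuY Q μ)) atTop
      (𝓝 (∫ p, θ p * max (q₁ p) (q₂ p) ∂(nuY Q μ))) := by
    refine tendsto_integral_of_dominated_convergence (fun p => C * (|q₁ p| + |q₂ p|)) ?_ ?_ ?_ ?_
    · intro n
      exact ((int1 (hθ.mul (hχ n)) h1.1).add (int1 (hθ.mul (hχc n)) h2.1)).aestronglyMeasurable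
    · exact (h1.1.abs.add h2.1.abs).const_mul C
    · refine fun n => Eventually.of_forall fun p => ?_
      have hx := hχ1 n p
      have e : θ p * χ n p * q₁ p + θ p * (1 - χ n p) * q₂ p = θ p * (χ n p * q₁ p + (1 - χ n p) * q₂ p) := by ring
      rw [e, norm_mul]
      have : ‖χ n p * q₁ p + (1 - χ n p) * q₂ p‖ ≤ |q₁ p| + |q₂ p| := by
        refine (abs_add_le _ _).trans (add_le_add ?_ ?_)
        · rw [abs_mul, abs_of_nonneg hx.1]
          exact mul_le_of_le_one_left (abs_nonneg _) hx.2
        · rw [abs_mul, abs_of_nonneg (sub_nonneg.2 hx.2)]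
          exact mul_le_of_le_one_left (abs_nonneg _) (by linarith [hx.1])
      exact mul_le_mul (hC p) this (norm_nonneg _) ((abs_nonneg _).trans (hC p))
    · filter_upwards [hχt] with p hp
      have ht := ((hp.const_mul (θ p)).mul_const (q₁ p)).add (((hp.const_sub 1).const_mul (θ p)).mul_const (q₂ p))
      convert ht using 2
      by_cases hlt : q₂ p < q₁ p
      · have : p ∈ {p | q₂ p < q₁ p} := hlt
        rw [Set.indicator_of_mem this, max_eq_left hlt.le]; simp
      · have : p ∉ {p | q₂ p < q₁ p} := hlt
        rw [Set.indicator_of_notMem this, max_eq_right (not_lt.1 hlt)]; simp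
  have hη3 : 0 < η / 3 := by positivity
  obtain ⟨n, hn⟩ := (lim.eventually_const_lt (sub_lt_self _ hη3)).exists
  filter_upwards [h1.2.2 _ (hθ.mul (hχ n)) (fun p => mul_nonneg (hθ0 p) (hχ1 n p).1) _ hη3,
    h2.2.2 _ (hθ.mul (hχc n)) (fun p => mul_nonneg (hθ0 p) (sub_nonneg.2 (hχ1 n p).2)) _ hη3] with k hk1 hk2
  rw [integral_add (int1 (hθ.mul (hχ n)) h1.1) (int1 (hθ.mul (hχc n)) h2.1)] at hn
  have : ∫ p, θ (sc T (ε k) p) * G k p ∂((volume.restrict Q).prod μ) =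
      (∫ p, (θ (sc T (ε k) p) * χ n (sc T (ε k) p)) * G k p ∂((volume.restrict Q).prod μ)) +
      ∫ p, (θ (sc T (ε k) p) * (1 - χ n (sc T (ε k) p))) * G k p ∂((volume.restrict Q).prod μ) := by
    rw [← integral_add (int2 (hθ.mul (hχ n)) k) (int2 (hθ.mul (hχc n)) k)]
    congr 1; ext p; ring
  rw [this]
  linarith

lemma alg {X : Type*} [MeasurableSpace X] (m : Measure X) [IsFiniteMeasure m] (w h : X → ℝ) (D : X → Fin N → ℝ) (ξ : Fin N → ℝ)
    (hw : Measurable w) (hwb : ∃ C, ∀ p, |w p| ≤ C) (hh : Measurable h) (hhb : ∃ C, ∀ p, |h p| ≤ C)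
    (hD : ∀ j, Integrable (fun p => D p j) m) :
    Integrable (fun p => w p * (ξ ⬝ᵥ D p - h p)) m ∧
    ∫ p, w p * (ξ ⬝ᵥ D p - h p) ∂m = (∑ j, ξ j * ∫ p, w p * D p j ∂m) - ∫ p, w p * h p ∂m := by
  obtain ⟨C, hC⟩ := hwb
  obtain ⟨B, hB⟩ := hhb
  have i1 : ∀ j, Integrable (fun p => ξ j * (w p * D p j)) m := fun j =>
    ((hD j).bdd_mul hw.aestronglyMeasurable (Eventually.of_forall hC)).const_mul _
  have i2 : Integrable (fun p => w p * h p) m :=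
    (Integrable.of_bound hh.aestronglyMeasurable B (Eventually.of_forall hB)).bdd_mul hw.aestronglyMeasurable (Eventually.of_forall hC)
  have e : (fun p => w p * (ξ ⬝ᵥ D p - h p)) = fun p => (∑ j, ξ j * (w p * D p j)) - w p * h p := by
    ext p
    rw [dotProduct, mul_sub, Finset.mul_sum]
    congr 1
    exact Finset.sum_congr rfl fun j _ => by ring
  have i3 := integrable_finsetSum Finset.univ (fun j _ => i1 j)
  rw [e]
  refine ⟨i3.sub i2, ?_⟩
  rw [integral_sub i3 i2, integral_finsetSum _ (fun j _ => i1 j)]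
  simp_rw [integral_const_mul]

lemma qq_base (hN : 1 ≤ N) {T : (Fin N → ℝ) → Ω → Ω} {μ : Measure Ω} [IsProbabilityMeasure μ] (hT : IsDynSys μ T)
    {ε : ℕ → ℝ} (hε : ∀ k, ε k ∈ Set.Ioc (0 : ℝ) 1) (hε0 : Tendsto ε atTop (𝓝 0))
    {Q : Set (Fin N → ℝ)} (hQo : IsOpen Q) (hQb : Bornology.IsBounded Q)
    {G : ℕ → (Fin N → ℝ) × Ω → ℝ} (hG : ∀ k, Integrable (G k) ((volume.restrict Q).prod μ))
    (hG0 : ∀ k p, 0 ≤ G k p)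
    (D : ℕ → (Fin N → ℝ) → Ω → Fin N → ℝ) (V : (Fin N → ℝ) → Ω → (Fin N → ℝ) → Fin N → ℝ)
    (hVm : Measurable fun p : ((Fin N → ℝ) × Ω) × (Fin N → ℝ) => V p.1.1 p.1.2 p.2)
    (hD : ∀ k j, Integrable (fun p : (Fin N → ℝ) × Ω => D k p.1 p.2 j) ((volume.restrict Q).prod μ))
    (hV : ∀ j, Integrable (fun p : ((Fin N → ℝ) × Ω) × (Fin N → ℝ) => V p.1.1 p.1.2 p.2 j) (nuY Q μ))
    (hc : ∀ j, WeakStoch2Scale μ T Q ε (fun k x ω => D k x ω j) (fun x ω y => V x ω y j))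
    (ξ : Fin N → ℝ) (h : ((Fin N → ℝ) × Ω) × (Fin N → ℝ) → ℝ) (hm : Measurable h) (hb : ∃ B, ∀ p, |h p| ≤ B)
    (hcont : ∀ ω, Continuous fun q : (Fin N → ℝ) × (Fin N → ℝ) => h ((q.1, ω), q.2))
    (hper : ∀ x ω, ZPeriodic fun y => h ((x, ω), y))
    (hlow : ∀ k p, ξ ⬝ᵥ D k p.1 p.2 - h (sc T (ε k) p) ≤ G k p) :
    QQ T ε Q μ G (fun p => ξ ⬝ᵥ V p.1.1 p.1.2 p.2 - h p) := by
  have hfin : IsFiniteMeasure ((volume : Measure (Fin N → ℝ)).restrict Q) :=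
    ⟨by simpa using hQb.measure_lt_top⟩
  have halg := fun (w : ((Fin N → ℝ) × Ω) × (Fin N → ℝ) → ℝ) hw hwb =>
    alg (nuY Q μ) w h (fun p => V p.1.1 p.1.2 p.2) ξ hw hwb hm hb hV
  have hqi : Integrable (fun p : ((Fin N → ℝ) × Ω) × (Fin N → ℝ) => ξ ⬝ᵥ V p.1.1 p.1.2 p.2 - h p) (nuY Q μ) := by
    simpa using (halg (fun _ => 1) measurable_const ⟨1, by simp⟩).1
  refine ⟨hqi, ?_, ?_⟩
  · exact ((dot_cont ξ).measurable.comp hVm).sub hm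
  intro θ hθ hθ0 η hη
  obtain ⟨C, hC⟩ := hθ.bdd
  obtain ⟨κ, k1, k2, k3, k4, k5⟩ := cutoff hN hQo hQb
  have hκb : ∀ n x, |κ n x| ≤ 1 := fun n x => by rw [abs_of_nonneg (k4 n x).1]; exact (k4 n x).2
  have limn : Tendsto (fun n => ∫ p, (κ n p.1.1 * θ p) * (ξ ⬝ᵥ V p.1.1 p.1.2 p.2 - h p) ∂(nuY Q μ)) atTop
      (𝓝 (∫ p, θ p * (ξ ⬝ᵥ V p.1.1 p.1.2 p.2 - h p) ∂(nuY Q μ))) := by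
    have hi := (halg θ hθ.meas ⟨C, hC⟩).1
    refine tendsto_integral_of_dominated_convergence (fun p => |θ p * (ξ ⬝ᵥ V p.1.1 p.1.2 p.2 - h p)|) ?_ hi.abs ?_ ?_
    · intro n
      refine (halg (fun p => κ n p.1.1 * θ p) ?_ (bdd_mul ⟨1, fun p => hκb _ _⟩ ⟨C, hC⟩)).1.aestronglyMeasurable
      exact ((k1 n).continuous.measurable.comp (by fun_prop)).mul hθ.meas
    · refine fun n => Eventually.of_forall fun p => ?_
      rw [mul_assoc, norm_mul]
      exact mul_le_of_le_one_left (abs_nonneg _) (hκb _ _)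
    · filter_upwards [nuY_ae Q hQo.measurableSet μ] with p hp
      have := ((k5 _ hp).mul_const (θ p)).mul_const (ξ ⬝ᵥ V p.1.1 p.1.2 p.2 - h p)
      simpa using this
  have hη2 : 0 < η / 2 := by positivity
  obtain ⟨n, hn⟩ := (limn.eventually_const_lt (sub_lt_self _ hη2)).exists
  have hκm : Measurable fun p : ((Fin N → ℝ) × Ω) × (Fin N → ℝ) => κ n p.1.1 :=
    (k1 n).continuous.measurable.comp (by fun_prop)
  have hwm : Measurable fun p : ((Fin N → ℝ) × Ω) × (Fin N → ℝ) => κ n p.1.1 * θ p := hκm.mul hθ.meas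
  have hwb : ∃ B, ∀ p : ((Fin N → ℝ) × Ω) × (Fin N → ℝ), |κ n p.1.1 * θ p| ≤ B := bdd_mul ⟨1, fun p => hκb _ _⟩ ⟨C, hC⟩
  have halgk := fun k => alg ((volume.restrict Q).prod μ) (fun p => κ n p.1 * θ (sc T (ε k) p)) (fun p => h (sc T (ε k) p))
    (fun p => D k p.1 p.2) ξ (hwm.comp (sc_meas hT (ε k))) (hwb.imp fun _ hx p => hx (sc T (ε k) p))
    (hm.comp (sc_meas hT (ε k))) (hb.imp fun _ hx p => hx (sc T (ε k) p)) (hD k)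
  have limk : Tendsto (fun k => ∫ p, κ n p.1 * θ (sc T (ε k) p) * (ξ ⬝ᵥ D k p.1 p.2 - h (sc T (ε k) p)) ∂((volume.restrict Q).prod μ)) atTop
      (𝓝 (∫ p, (κ n p.1.1 * θ p) * (ξ ⬝ᵥ V p.1.1 p.1.2 p.2 - h p) ∂(nuY Q μ))) := by
    rw [(halg _ hwm hwb).2]
    simp_rw [fun k => (halgk k).2]
    refine Tendsto.sub (tendsto_finsetSum _ fun j _ => Tendsto.const_mul _ ?_) ?_
    · exact lin hT (fun k => hD k j) (hV j) (hc j) (κ n) (k1 n) (k2 n) (k3 n) hθ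
    · obtain ⟨B, hB⟩ := bdd_mul hwb hb
      refine osc hT hQb hQo.measurableSet (fun p => κ n p.1.1 * θ p * h p) (hwm.mul hm) B hB ?_ ?_ ?_ hε hε0
      · intro ω
        exact (((k1 n).continuous.comp continuous_fst).mul (hθ.cont ω)).mul (hcont ω)
      · intro x ω y k
        have a1 := hθ.per x ω y k
        have a2 := hper x ω y k
        simp only at a1 a2 ⊢
        rw [a1, a2]
      · intro x hx ω y
        have : κ n x = 0 := image_eq_zero_of_notMem_tsupport fun hx' => hx (k3 n hx')
        simp [this]
  filter_upwards [limk.eventually_const_lt (sub_lt_self _ hη2)] with k hk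
  have hle : ∫ p, κ n p.1 * θ (sc T (ε k) p) * (ξ ⬝ᵥ D k p.1 p.2 - h (sc T (ε k) p)) ∂((volume.restrict Q).prod μ)
      ≤ ∫ p, θ (sc T (ε k) p) * G k p ∂((volume.restrict Q).prod μ) := by
    refine integral_mono (halgk k).1 ?_ fun p => ?_
    · exact (hG k).bdd_mul (hθ.meas.comp (sc_meas hT _)).aestronglyMeasurable (Eventually.of_forall fun p => hC _)
    · have t0 := hθ0 (sc T (ε k) p)
      have q0 := k4 n p.1
      simp only
      calc _ ≤ κ n p.1 * θ (sc T (ε k) p) * G k p := mul_le_mul_of_nonneg_left (hlow k p) (mul_nonneg q0.1 t0)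
        _ ≤ 1 * θ (sc T (ε k) p) * G k p := by
          gcongr
          · exact hG0 k p
          · exact q0.2
        _ = _ := by ring
  linarith

end

section
variable {N : ℕ} {Ω : Type*} [MeasurableSpace Ω]

lemma core (hN : 1 ≤ N) {T : (Fin N → ℝ) → Ω → Ω} {μ : Measure Ω} [IsProbabilityMeasure μ] (hT : IsDynSys μ T)
    {ε : ℕ → ℝ} (hε : ∀ k, ε k ∈ Set.Ioc (0 : ℝ) 1) (hε0 : Tendsto ε atTop (𝓝 0))
    {Q : Set (Fin N → ℝ)} (hQo : IsOpen Q) (hQb : Bornology.IsBounded Q)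
    {F : (Fin N → ℝ) → Ω → (Fin N → ℝ) → (Fin N → ℝ) → ℝ} (hF : GoodF F)
    (D : ℕ → (Fin N → ℝ) → Ω → Fin N → ℝ) (V : (Fin N → ℝ) → Ω → (Fin N → ℝ) → Fin N → ℝ)
    (hVm : Measurable fun p : ((Fin N → ℝ) × Ω) × (Fin N → ℝ) => V p.1.1 p.1.2 p.2)
    (hD : ∀ k j, Integrable (fun p : (Fin N → ℝ) × Ω => D k p.1 p.2 j) ((volume.restrict Q).prod μ))
    (hV : ∀ j, Integrable (fun p : ((Fin N → ℝ) × Ω) × (Fin N → ℝ) => V p.1.1 p.1.2 p.2 j) (nuY Q μ))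
    (hc : ∀ j, WeakStoch2Scale μ T Q ε (fun k x ω => D k x ω j) (fun x ω y => V x ω y j))
    (hG : ∀ k, Integrable (fun p : (Fin N → ℝ) × Ω => F p.1 (T ((ε k)⁻¹ • p.1) p.2) (((ε k) ^ 2)⁻¹ • p.1) (D k p.1 p.2))
      ((volume.restrict Q).prod μ))
    (hFV : Integrable (fun p : ((Fin N → ℝ) × Ω) × (Fin N → ℝ) => F p.1.1 p.1.2 p.2 (V p.1.1 p.1.2 p.2)) (nuY Q μ))
    (η : ℝ) (hη : 0 < η) :
    ∀ᶠ k in atTop, (∫ p, F p.1.1 p.1.2 p.2 (V p.1.1 p.1.2 p.2) ∂(nuY Q μ)) - η ≤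
      ∫ p, F p.1 (T ((ε k)⁻¹ • p.1) p.2) (((ε k) ^ 2)⁻¹ • p.1) (D k p.1 p.2) ∂((volume.restrict Q).prod μ) := by
  let d := TopologicalSpace.denseSeq (Fin N → ℝ)
  let q : ℕ → ((Fin N → ℝ) × Ω) × (Fin N → ℝ) → ℝ := fun n p => d n ⬝ᵥ V p.1.1 p.1.2 p.2 - cj F (d n) p
  let G : ℕ → (Fin N → ℝ) × Ω → ℝ := fun k p => F p.1 (T ((ε k)⁻¹ • p.1) p.2) (((ε k) ^ 2)⁻¹ • p.1) (D k p.1 p.2)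
  have hq : ∀ n, QQ T ε Q μ G (q n) := fun n => by
    refine qq_base hN hT hε hε0 hQo hQb hG (fun k p => hF.nonneg _ _ _ _) D V hVm hD hV hc (d n) (cj F (d n))
      (cj_meas hF _) (cj_bdd hF _) (cj_cont hF _) (cj_per hF _) fun k p => ?_
    have := cj_ge hF (d n) (sc T (ε k) p) (D k p.1 p.2)
    simp only [sc] at this
    simp only [G, sc]
    linarith
  let M : ℕ → ((Fin N → ℝ) × Ω) × (Fin N → ℝ) → ℝ := fun n p => partialSups (fun m => q m p) n
  have hM : ∀ n, QQ T ε Q μ G (M n) := by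
    intro n
    induction n with
    | zero => simpa [M] using hq 0
    | succ n ih =>
      have := qq_max hN hT hQb hG ih (hq (n+1))
      convert this using 2 with p
      simp only [M]
      rw [partialSups_add_one]
  have hqF : ∀ n p, q n p ≤ F p.1.1 p.1.2 p.2 (V p.1.1 p.1.2 p.2) := fun n p => by
    have := cj_ge hF (d n) p (V p.1.1 p.1.2 p.2)
    simp only [q]
    linarith
  have hMF : ∀ n p, M n p ≤ F p.1.1 p.1.2 p.2 (V p.1.1 p.1.2 p.2) := fun n p =>
    partialSups_le _ _ _ fun m _ => hqF m p
  have hqM : ∀ {m n}, m ≤ n → ∀ p, q m p ≤ M n p := fun {m n} h p =>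
    le_partialSups_of_le (fun m => q m p) h
  have lim : Tendsto (fun n => ∫ p, M n p ∂(nuY Q μ)) atTop (𝓝 (∫ p, F p.1.1 p.1.2 p.2 (V p.1.1 p.1.2 p.2) ∂(nuY Q μ))) := by
    refine tendsto_integral_of_dominated_convergence (fun p => |q 0 p| + F p.1.1 p.1.2 p.2 (V p.1.1 p.1.2 p.2))
      (fun n => (hM n).1.aestronglyMeasurable) ((hq 0).1.abs.add hFV) (fun n => Eventually.of_forall fun p => ?_)
      (Eventually.of_forall fun p => ?_)
    · have h1 := hMF n p
      have h2 := hqM (Nat.zero_le n) p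
      have h3 := neg_abs_le (q 0 p)
      have h4 := abs_nonneg (q 0 p)
      have h5 := hF.nonneg p.1.1 p.1.2 p.2 (V p.1.1 p.1.2 p.2)
      exact abs_le.2 ⟨by linarith, by linarith⟩
    · refine tendsto_order.2 ⟨fun a ha => ?_, fun a ha => Eventually.of_forall fun n => (hMF n p).trans_lt ha⟩
      obtain ⟨m, hm⟩ := cj_dense hF p _ a ha
      filter_upwards [eventually_ge_atTop m] with n hn
      exact lt_of_lt_of_le hm (hqM hn p)
  have hη2 : 0 < η / 2 := by positivity
  obtain ⟨n, hn⟩ := (lim.eventually_const_lt (sub_lt_self _ hη2)).exists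
  filter_upwards [(hM n).2.2 (fun _ => 1) (Adm.const 1) (fun _ => zero_le_one) _ hη2] with k hk
  simp only [one_mul, G] at hk
  linarith

end

lemma enorm2_nonneg {N : ℕ} (v : Fin N → ℝ) : 0 ≤ enorm2 v := Real.sqrt_nonneg _

lemma enorm2_cont {N : ℕ} : Continuous (enorm2 : (Fin N → ℝ) → ℝ) := by
  unfold enorm2; fun_prop

lemma abs_le_enorm2 {N : ℕ} (v : Fin N → ℝ) (i : Fin N) : |v i| ≤ enorm2 v := by
  unfold enorm2
  refine Real.abs_le_sqrt ?_
  exact Finset.single_le_sum (f := fun i => v i ^ 2) (fun j _ => sq_nonneg _) (Finset.mem_univ i)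

lemma norm_le_enorm2 {N : ℕ} (v : Fin N → ℝ) : ‖v‖ ≤ enorm2 v :=
  (pi_norm_le_iff_of_nonneg (enorm2_nonneg v)).2 (abs_le_enorm2 v)

lemma enorm2_zero {N : ℕ} : enorm2 (0 : Fin N → ℝ) = 0 := by simp [enorm2]

lemma IsYoung.mono {Φ : ℝ → ℝ} (h : IsYoung Φ) {s t : ℝ} (hs : 0 ≤ s) (hst : s ≤ t) : Φ s ≤ Φ t := by
  obtain ⟨_, hc, h0, _, hn, _, _⟩ := h
  rcases hs.eq_or_lt with rfl | hs'
  · rw [h0]; exact hn t hst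
  have ht : 0 < t := hs'.trans_le hst
  have h1 : 0 ≤ s / t := by positivity
  have h2 : s / t ≤ 1 := (div_le_one ht).2 hst
  have := hc.2 (show t ∈ Set.Ici (0:ℝ) from ht.le) (Set.mem_Ici.2 (le_refl (0:ℝ))) h1 (sub_nonneg.2 h2) (by ring)
  simp only [smul_eq_mul, h0, mul_zero, add_zero, div_mul_cancel₀ _ ht.ne'] at this
  have h3 := mul_le_of_le_one_left (hn t ht.le) h2
  linarith

lemma IsYoung.cont {Φ : ℝ → ℝ} (h : IsYoung Φ) {N : ℕ} : Continuous fun v : Fin N → ℝ => Φ (enorm2 v) :=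
  h.1.comp_continuous enorm2_cont enorm2_nonneg

lemma IsYoung.super {Φ : ℝ → ℝ} (h : IsYoung Φ) (M : ℝ) (hM : 0 ≤ M) : ∃ C : ℝ, ∀ t, 0 ≤ t → M * t - C ≤ Φ t := by
  obtain ⟨_, hc, h0, _, hn, _, ht⟩ := h
  obtain ⟨t₁, h1⟩ := (eventually_atTop.1 (ht.eventually_ge_atTop M))
  refine ⟨M * max t₁ 1, fun t ht0 => ?_⟩
  by_cases h : max t₁ 1 ≤ t
  · have h2 := h1 t ((le_max_left _ _).trans h)
    have hp : 0 < t := lt_of_lt_of_le one_pos ((le_max_right _ _).trans h)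
    rw [le_div_iff₀ hp] at h2
    have : 0 ≤ M * max t₁ 1 := mul_nonneg hM (le_trans zero_le_one (le_max_right _ _))
    linarith
  · have h2 := hn t ht0
    have : M * t ≤ M * max t₁ 1 := by gcongr; exact (not_le.1 h).le
    linarith

lemma delta_pow {Φ : ℝ → ℝ} (h : IsYoung Φ) (h2 : Delta2 Φ) (n : ℕ) :
    ∃ A B : ℝ, 0 ≤ A ∧ 0 ≤ B ∧ ∀ t, 0 ≤ t → Φ (2 ^ n * t) ≤ A * Φ t + B := by
  have hn := h.2.2.2.2.1
  obtain ⟨α, hα, t₀, ht₀, hd⟩ := h2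
  have h1 : ∀ t, 0 ≤ t → Φ (2 * t) ≤ α * Φ t + Φ (2 * t₀) := fun t ht => by
    by_cases hh : t₀ ≤ t
    · have := hd t hh
      have := hn (2 * t₀) (by positivity)
      linarith
    · have h3 := h.mono (by positivity : 0 ≤ 2 * t) (by linarith [not_le.1 hh] : 2 * t ≤ 2 * t₀)
      have := mul_nonneg hα.le (hn t ht)
      linarith
  induction n with
  | zero => exact ⟨1, 0, by simp, le_rfl, fun t _ => by simp⟩
  | succ n ih =>
    obtain ⟨A, B, hA, hB, hAB⟩ := ih
    refine ⟨α * A, α * B + Φ (2 * t₀), by positivity, add_nonneg (by positivity) (hn _ (by positivity)), fun t ht => ?_⟩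
    have e : (2:ℝ) ^ (n+1) * t = 2 * (2 ^ n * t) := by ring
    rw [e]
    have h4 := h1 (2 ^ n * t) (by positivity)
    have h5 := mul_le_mul_of_nonneg_left (hAB t ht) hα.le
    linarith

lemma lux_bound {X : Type*} [MeasurableSpace X] (m : Measure X) [IsFiniteMeasure m]
    {Φ : ℝ → ℝ} (h : IsYoung Φ) (h2 : Delta2 Φ) (L : ℝ≥0∞) (hL : L < ⊤) :
    ∃ C : ℝ, ∀ u : X → ℝ, luxNorm Φ m u ≤ L → ∫⁻ x, ENNReal.ofReal (Φ |u x|) ∂m ≤ ENNReal.ofReal C := by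
  obtain ⟨n, hn⟩ : ∃ n : ℕ, L.toReal + 1 < 2 ^ n := pow_unbounded_of_one_lt _ (by norm_num)
  obtain ⟨A, B, hA, hB, hAB⟩ := delta_pow h h2 n
  have hpos := h.2.2.2.2.1
  refine ⟨A + B * m.real Set.univ, fun u hu => ?_⟩
  have hlt : luxNorm Φ m u < ENNReal.ofReal (L.toReal + 1) := by
    refine hu.trans_lt ?_
    rw [ENNReal.lt_ofReal_iff_toReal_lt hL.ne]
    linarith
  obtain ⟨_, ⟨δ, hδ, rfl, hi⟩, hδL⟩ := sInf_lt_iff.1 hlt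
  have hδL' : δ < L.toReal + 1 := (ENNReal.ofReal_lt_ofReal_iff_of_nonneg hδ.le).1 hδL
  have key : ∀ x, ENNReal.ofReal (Φ |u x|) ≤ ENNReal.ofReal A * ENNReal.ofReal (Φ (|u x| / δ)) + ENNReal.ofReal B := by
    intro x
    rw [← ENNReal.ofReal_mul hA, ← ENNReal.ofReal_add (mul_nonneg hA (hpos _ (by positivity))) hB]
    refine ENNReal.ofReal_le_ofReal (le_trans (h.mono (abs_nonneg _) ?_) (hAB (|u x| / δ) (by positivity)))
    calc |u x| = δ * (|u x| / δ) := by field_simp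
      _ ≤ _ := by gcongr; linarith
  calc _ ≤ ∫⁻ x, (ENNReal.ofReal A * ENNReal.ofReal (Φ (|u x| / δ)) + ENNReal.ofReal B) ∂m := lintegral_mono key
    _ = ENNReal.ofReal A * (∫⁻ x, ENNReal.ofReal (Φ (|u x| / δ)) ∂m) + ENNReal.ofReal B * m Set.univ := by
      rw [lintegral_add_right _ measurable_const, lintegral_const_mul' _ _ ENNReal.ofReal_ne_top, lintegral_const]
    _ ≤ ENNReal.ofReal A * 1 + ENNReal.ofReal B * m Set.univ := by gcongr
    _ = _ := by
      rw [mul_one, ENNReal.ofReal_add hA (by positivity), ENNReal.ofReal_mul hB, Measure.real, ENNReal.ofReal_toReal (measure_ne_top _ _)]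

lemma orl {X : Type*} [MeasurableSpace X] (m : Measure X) [IsFiniteMeasure m] {N : ℕ}
    {Φ : ℝ → ℝ} (h : IsYoung Φ) (h2 : Delta2 Φ) (L : ℝ≥0∞) (hL : L < ⊤) :
    ∃ C : ℝ, ∀ W : X → Fin N → ℝ, Measurable W → luxNorm Φ m (fun x => enorm2 (W x)) ≤ L →
      Integrable (fun x => Φ (enorm2 (W x))) m ∧ ∫ x, Φ (enorm2 (W x)) ∂m ≤ C ∧
      ∀ j, Integrable (fun x => W x j) m := by
  obtain ⟨C, hC⟩ := lux_bound m h h2 L hL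
  refine ⟨max C 0, fun W hW hl => ?_⟩
  have h1 := hC _ hl
  have hm : Measurable fun x => Φ (enorm2 (W x)) := h.cont.measurable.comp hW
  have hpos : ∀ x, 0 ≤ Φ (enorm2 (W x)) := fun x => h.2.2.2.2.1 _ (enorm2_nonneg _)
  simp_rw [abs_of_nonneg (enorm2_nonneg _)] at h1
  have hi : Integrable (fun x => Φ (enorm2 (W x))) m := by
    refine ⟨hm.aestronglyMeasurable, ?_⟩
    rw [hasFiniteIntegral_iff_ofReal (Eventually.of_forall hpos)]
    exact h1.trans_lt ENNReal.ofReal_lt_top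
  refine ⟨hi, ?_, fun j => ?_⟩
  · rw [integral_eq_lintegral_of_nonneg_ae (Eventually.of_forall hpos) hm.aestronglyMeasurable]
    refine ENNReal.toReal_le_of_le_ofReal (le_max_right _ _) (h1.trans (ENNReal.ofReal_le_ofReal (le_max_left _ _)))
  · obtain ⟨t, ht⟩ := h.super 1 zero_le_one
    refine Integrable.mono' (hi.add (integrable_const t)) (by fun_prop) (Eventually.of_forall fun x => ?_)
    have h3 := ht _ (enorm2_nonneg (W x))
    have h4 := abs_le_enorm2 (W x) j
    simp only [Pi.add_apply, Real.norm_eq_abs]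
    linarith

lemma modF {N : ℕ} {Ω : Type*} [MeasurableSpace Ω] (μ : Measure Ω)
    [IsProbabilityMeasure μ] (Φ : ℝ → ℝ) (hΦ : IsYoung Φ)
    (f : (Fin N → ℝ) → Ω → (Fin N → ℝ) → (Fin N → ℝ) → ℝ)
    (hfmeas : ∀ x lam : Fin N → ℝ, Measurable fun p : Ω × (Fin N → ℝ) => f x p.1 p.2 lam)
    (hfcont : ∀ᵐ ω ∂μ, Continuous fun q : (Fin N → ℝ) × (Fin N → ℝ) × (Fin N → ℝ) =>
      f q.1 ω q.2.1 q.2.2)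
    (hH2 : ∀ᵐ p ∂(μ.prod (volume : Measure (Fin N → ℝ))), ∀ x : Fin N → ℝ,
      StrictConvexOn ℝ Set.univ (f x p.1 p.2))
    (c₁ c₂ : ℝ) (hc₁ : 0 < c₁)
    (hH3 : ∀ᵐ p ∂(μ.prod (volume : Measure (Fin N → ℝ))), ∀ x lam : Fin N → ℝ,
      c₁ * Φ (enorm2 lam) ≤ f x p.1 p.2 lam ∧ f x p.1 p.2 lam ≤ c₂ * (1 + Φ (enorm2 lam)))
    (hH4 : ∀ᵐ ω ∂μ, ∀ (x y lam : Fin N → ℝ) (k : Fin N → ℤ),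
      f x ω (y + fun i => (k i : ℝ)) lam = f x ω y lam) :
    ∃ F : (Fin N → ℝ) → Ω → (Fin N → ℝ) → (Fin N → ℝ) → ℝ, GoodF F ∧
      (∀ x ω y lam, F x ω y lam ≤ c₂ * (1 + Φ (enorm2 lam))) ∧
      ∀ᵐ ω ∂μ, ∀ x y lam, F x ω y lam = f x ω y lam := by
  have h2 := Measure.ae_ae_of_ae_prod hH2
  have h3 := Measure.ae_ae_of_ae_prod hH3
  have hall : ∀ᵐ ω ∂μ, (Continuous fun q : (Fin N → ℝ) × (Fin N → ℝ) × (Fin N → ℝ) => f q.1 ω q.2.1 q.2.2) ∧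
      (∀ (x y lam : Fin N → ℝ) (k : Fin N → ℤ), f x ω (y + fun i => (k i : ℝ)) lam = f x ω y lam) ∧
      (∀ x y, ConvexOn ℝ Set.univ (f x ω y)) ∧
      ∀ y x lam, c₁ * Φ (enorm2 lam) ≤ f x ω y lam ∧ f x ω y lam ≤ c₂ * (1 + Φ (enorm2 lam)) := by
    filter_upwards [hfcont, hH4, h2, h3] with ω a1 a2 a3 a4
    have hcy : ∀ x lam, Continuous fun y => f x ω y lam := fun x lam =>
      a1.comp (by fun_prop : Continuous fun y => (x, y, lam))
    refine ⟨a1, a2, ?_, ?_⟩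
    · have hcl : IsClosed {y | ∀ (x u v : Fin N → ℝ) (s t : ℝ), 0 ≤ s → 0 ≤ t → s + t = 1 →
          f x ω y (s • u + t • v) ≤ s * f x ω y u + t * f x ω y v} := by
        simp only [Set.setOf_forall]
        refine isClosed_iInter fun x => isClosed_iInter fun u => isClosed_iInter fun v => isClosed_iInter fun s =>
          isClosed_iInter fun t => isClosed_iInter fun _ => isClosed_iInter fun _ => isClosed_iInter fun _ => ?_
        exact isClosed_le (hcy _ _) (((hcy _ _).const_mul _).add ((hcy _ _).const_mul _))
      have hd : Dense {y | ∀ (x u v : Fin N → ℝ) (s t : ℝ), 0 ≤ s → 0 ≤ t → s + t = 1 →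
          f x ω y (s • u + t • v) ≤ s * f x ω y u + t * f x ω y v} := by
        refine Measure.dense_of_ae (μ := volume) ?_
        filter_upwards [a3] with y hy x u v s t hs ht hst
        exact (hy x).convexOn.2 (Set.mem_univ u) (Set.mem_univ v) hs ht hst
      intro x y
      refine ⟨convex_univ, fun u _ v _ s t hs ht hst => ?_⟩
      have := hd.closure_eq ▸ hcl.closure_eq
      have hy : y ∈ {y | ∀ (x u v : Fin N → ℝ) (s t : ℝ), 0 ≤ s → 0 ≤ t → s + t = 1 →
          f x ω y (s • u + t • v) ≤ s * f x ω y u + t * f x ω y v} := this ▸ Set.mem_univ y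
      exact hy x u v s t hs ht hst
    · have hcl : IsClosed {y | ∀ x lam, c₁ * Φ (enorm2 lam) ≤ f x ω y lam ∧ f x ω y lam ≤ c₂ * (1 + Φ (enorm2 lam))} := by
        simp only [Set.setOf_forall]
        refine isClosed_iInter fun x => isClosed_iInter fun u => ?_
        exact (isClosed_le continuous_const (hcy _ _)).inter (isClosed_le (hcy _ _) continuous_const)
      have hd : Dense {y | ∀ x lam, c₁ * Φ (enorm2 lam) ≤ f x ω y lam ∧ f x ω y lam ≤ c₂ * (1 + Φ (enorm2 lam))} :=
        Measure.dense_of_ae (μ := volume) a4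
      intro y
      have := hd.closure_eq ▸ hcl.closure_eq
      have hy : y ∈ {y | ∀ x lam, c₁ * Φ (enorm2 lam) ≤ f x ω y lam ∧ f x ω y lam ≤ c₂ * (1 + Φ (enorm2 lam))} := this ▸ Set.mem_univ y
      exact hy
  obtain ⟨S, hS, hSm, hSP⟩ := hall.exists_measurable_mem
  obtain ⟨ω₀, hω₀⟩ : S.Nonempty := by
    have : (ae μ).NeBot := inferInstance
    exact this.nonempty_of_mem hS
  classical
  let π : Ω → Ω := fun ω => if ω ∈ S then ω else ω₀
  have hπ : ∀ ω, π ω ∈ S := fun ω => by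
    by_cases h : ω ∈ S
    · simpa [π, h] using h
    · simpa [π, h] using hω₀
  have hP := fun ω => hSP (π ω) (hπ ω)
  refine ⟨fun x ω y lam => f x (π ω) y lam, ?_, ?_, ?_⟩
  · refine ⟨?_, fun ω => (hP ω).1, fun x ω l y k => (hP ω).2.1 x y l k, fun x ω y => (hP ω).2.2.1 x y, ?_, ?_, ?_⟩
    · intro x y l
      have hπm : Measurable π := Measurable.ite hSm measurable_id measurable_const
      exact (hfmeas x l).comp (hπm.prodMk measurable_const)
    · intro x ω y l
      exact le_trans (mul_nonneg hc₁.le (hΦ.2.2.2.2.1 _ (enorm2_nonneg _))) ((hP ω).2.2.2 y x l).1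
    · refine ⟨c₂ * (1 + Φ 0), fun x ω y => ?_⟩
      have := ((hP ω).2.2.2 y x 0).2
      rwa [enorm2_zero] at this
    · intro M
      obtain ⟨C, hC⟩ := hΦ.super (|M| / c₁) (by positivity)
      refine ⟨c₁ * C, fun x ω y l => le_trans ?_ ((hP ω).2.2.2 y x l).1⟩
      have h1 := mul_le_mul_of_nonneg_left (hC _ (enorm2_nonneg l)) hc₁.le
      have h2 : M * ‖l‖ ≤ |M| * enorm2 l :=
        mul_le_mul (le_abs_self M) (norm_le_enorm2 l) (norm_nonneg _) (abs_nonneg _)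
      have h3 : c₁ * (|M| / c₁ * enorm2 l - C) = |M| * enorm2 l - c₁ * C := by field_simp
      linarith
  · exact fun x ω y lam => ((hP ω).2.2.2 y x lam).2
  · filter_upwards [hS] with ω hω x y lam
    simp [π, hω]

lemma GoodF.joint {N : ℕ} {Ω : Type*} [MeasurableSpace Ω]
    {F : (Fin N → ℝ) → Ω → (Fin N → ℝ) → (Fin N → ℝ) → ℝ} (hF : GoodF F) :
    Measurable fun r : ((Fin N → ℝ) × (Fin N → ℝ) × (Fin N → ℝ)) × Ω => F r.1.1 r.2 r.1.2.1 r.1.2.2 :=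
  measurable_uncurry_of_continuous_of_measurable
    (u := fun (q : (Fin N → ℝ) × (Fin N → ℝ) × (Fin N → ℝ)) (ω : Ω) => F q.1 ω q.2.1 q.2.2) hF.cont
    (fun q => hF.meas _ _ _)

/-- lower semicontinuity of oscillating energies along gradients. -/
theorem stmt10 {N : ℕ} (hN : 1 ≤ N) {Ω : Type*} [MeasurableSpace Ω] (μ : Measure Ω)
    [IsProbabilityMeasure μ] (hgen : CountGenModNull μ)
    (Φ : ℝ → ℝ) (hΦ : IsYoung Φ) (hΦ2 : Delta2 Φ) (hΦ2' : DeltaPrime Φ)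
    (hΦc2 : Delta2 (conjY Φ)) (hΦc2' : DeltaPrime (conjY Φ))
    (T : (Fin N → ℝ) → Ω → Ω) (hT : IsDynSys μ T)
    (Q : Set (Fin N → ℝ)) (hQo : IsOpen Q) (hQb : Bornology.IsBounded Q)
    (f : (Fin N → ℝ) → Ω → (Fin N → ℝ) → (Fin N → ℝ) → ℝ)
    (hfmeas : ∀ x lam : Fin N → ℝ, Measurable fun p : Ω × (Fin N → ℝ) => f x p.1 p.2 lam)
    (hfcont : ∀ᵐ ω ∂μ, Continuous fun q : (Fin N → ℝ) × (Fin N → ℝ) × (Fin N → ℝ) =>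
      f q.1 ω q.2.1 q.2.2)
    (hH1 : ∃ ϖ : ℝ → ℝ, Continuous ϖ ∧ ϖ 0 = 0 ∧ (∀ t, 0 ≤ ϖ t) ∧
      ∃ a : (Fin N → ℝ) → ℝ, LocallyIntegrable a volume ∧
        ∀ᵐ p ∂(μ.prod (volume : Measure (Fin N → ℝ))), ∀ x x' lam : Fin N → ℝ,
          |f x p.1 p.2 lam - f x' p.1 p.2 lam| ≤ ϖ (enorm2 (x - x')) * (a p.2 + f x p.1 p.2 lam))
    (hH2 : ∀ᵐ p ∂(μ.prod (volume : Measure (Fin N → ℝ))), ∀ x : Fin N → ℝ,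
      StrictConvexOn ℝ Set.univ (f x p.1 p.2))
    (c₁ c₂ : ℝ) (hc₁ : 0 < c₁) (hc₂ : 0 < c₂)
    (hH3 : ∀ᵐ p ∂(μ.prod (volume : Measure (Fin N → ℝ))), ∀ x lam : Fin N → ℝ,
      c₁ * Φ (enorm2 lam) ≤ f x p.1 p.2 lam ∧ f x p.1 p.2 lam ≤ c₂ * (1 + Φ (enorm2 lam)))
    (hH4 : ∀ᵐ ω ∂μ, ∀ (x y lam : Fin N → ℝ) (k : Fin N → ℤ),
      f x ω (y + fun i => (k i : ℝ)) lam = f x ω y lam)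
    (ε : ℕ → ℝ) (hε : ∀ k, ε k ∈ Set.Ioc (0 : ℝ) 1) (hε0 : Tendsto ε atTop (nhds 0))
    (u : ℕ → (Fin N → ℝ) → Ω → ℝ) (Du : ℕ → (Fin N → ℝ) → Ω → Fin N → ℝ)
    (humeas : ∀ k, Measurable fun p : (Fin N → ℝ) × Ω => u k p.1 p.2)
    (hDumeas : ∀ k, Measurable fun p : (Fin N → ℝ) × Ω => Du k p.1 p.2)
    (hgrad : ∀ (k : ℕ) (i : Fin N) (φ : (Fin N → ℝ) → ℝ),
      ContDiff ℝ (⊤ : ℕ∞) φ → HasCompactSupport φ → tsupport φ ⊆ Q →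
      ∀ ψ : Ω → ℝ, Measurable ψ → (∃ C : ℝ, ∀ ω, |ψ ω| ≤ C) →
        (∫ p, u k p.1 p.2 * fderiv ℝ φ p.1 (Pi.single i 1) * ψ p.2
            ∂((volume.restrict Q).prod μ)) =
          -(∫ p, Du k p.1 p.2 i * φ p.1 * ψ p.2 ∂((volume.restrict Q).prod μ)))
    (hDubd : (⨆ k, luxNorm Φ ((volume.restrict Q).prod μ)
      fun p => enorm2 (Du k p.1 p.2)) < ⊤)
    (V : (Fin N → ℝ) → Ω → (Fin N → ℝ) → Fin N → ℝ)
    (hVmeas : Measurable fun p : ((Fin N → ℝ) × Ω) × (Fin N → ℝ) => V p.1.1 p.1.2 p.2)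
    (hVper : ∀ (x : Fin N → ℝ) (ω : Ω) (y : Fin N → ℝ) (k : Fin N → ℤ),
      V x ω (y + fun i => (k i : ℝ)) = V x ω y)
    (hVbd : luxNorm Φ (((volume.restrict Q).prod μ).prod (volume.restrict (Ycube N)))
      (fun p => enorm2 (V p.1.1 p.1.2 p.2)) < ⊤)
    (hconv : ∀ j : Fin N, WeakStoch2Scale μ T Q ε
      (fun k x ω => Du k x ω j) (fun x ω y => V x ω y j)) :
    (∫ p, f p.1.1 p.1.2 p.2 (V p.1.1 p.1.2 p.2)
        ∂(((volume.restrict Q).prod μ).prod (volume.restrict (Ycube N)))) ≤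
      atTop.liminf (fun k => ∫ p,
        f p.1 (T ((ε k)⁻¹ • p.1) p.2) (((ε k) ^ 2)⁻¹ • p.1) (Du k p.1 p.2)
        ∂((volume.restrict Q).prod μ)) := by
  have hfin : IsFiniteMeasure ((volume : Measure (Fin N → ℝ)).restrict Q) :=
    ⟨by simpa using hQb.measure_lt_top⟩
  obtain ⟨F, hF, hFup, hFf⟩ := modF μ Φ hΦ f hfmeas hfcont hH2 c₁ c₂ hc₁ hH3 hH4
  obtain ⟨C, hC⟩ := orl (N := N) ((volume.restrict Q).prod μ) hΦ hΦ2 _ hDubd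
  obtain ⟨C', hC'⟩ := orl (N := N) (nuY Q μ) hΦ hΦ2 _ hVbd
  have hDk := fun k => hC (fun p => Du k p.1 p.2) (hDumeas k)
    (le_iSup (fun k => luxNorm Φ ((volume.restrict Q).prod μ) fun p => enorm2 (Du k p.1 p.2)) k)
  have hVk := hC' (fun p => V p.1.1 p.1.2 p.2) hVmeas le_rfl
  -- integrability of the energies
  have hFV : Integrable (fun p : ((Fin N → ℝ) × Ω) × (Fin N → ℝ) => F p.1.1 p.1.2 p.2 (V p.1.1 p.1.2 p.2)) (nuY Q μ) := by
    refine Integrable.mono' (((integrable_const (1:ℝ)).add hVk.1).const_mul c₂) ?_ (Eventually.of_forall fun p => ?_)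
    · exact (hF.joint.comp ((measurable_fst.fst.prodMk (measurable_snd.prodMk hVmeas)).prodMk
        measurable_fst.snd)).aestronglyMeasurable
    · rw [Real.norm_of_nonneg (hF.nonneg _ _ _ _)]
      exact hFup _ _ _ _
  have hG : ∀ k, Integrable (fun p : (Fin N → ℝ) × Ω => F p.1 (T ((ε k)⁻¹ • p.1) p.2) (((ε k) ^ 2)⁻¹ • p.1) (Du k p.1 p.2))
      ((volume.restrict Q).prod μ) := by
    intro k
    refine Integrable.mono' (((integrable_const (1:ℝ)).add (hDk k).1).const_mul c₂) ?_ (Eventually.of_forall fun p => ?_)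
    · have := T_meas hT (ε k)
      have h' := hDumeas k
      refine (hF.joint.comp (?_ : Measurable fun p : (Fin N → ℝ) × Ω =>
        ((p.1, ((ε k) ^ 2)⁻¹ • p.1, Du k p.1 p.2), T ((ε k)⁻¹ • p.1) p.2))).aestronglyMeasurable
      exact (measurable_fst.prodMk ((by fun_prop : Measurable fun p : (Fin N → ℝ) × Ω => ((ε k) ^ 2)⁻¹ • p.1).prodMk h')).prodMk this
    · rw [Real.norm_of_nonneg (hF.nonneg _ _ _ _)]
      exact hFup _ _ _ _
  have hub : ∀ k, ∫ p, F p.1 (T ((ε k)⁻¹ • p.1) p.2) (((ε k) ^ 2)⁻¹ • p.1) (Du k p.1 p.2) ∂((volume.restrict Q).prod μ)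
      ≤ c₂ * (((volume.restrict Q).prod μ).real Set.univ + C) := by
    intro k
    calc _ ≤ ∫ p, c₂ * (1 + Φ (enorm2 (Du k p.1 p.2))) ∂((volume.restrict Q).prod μ) :=
          integral_mono (hG k) (((integrable_const (1:ℝ)).add (hDk k).1).const_mul c₂) fun p => hFup _ _ _ _
      _ = c₂ * (((volume.restrict Q).prod μ).real Set.univ + ∫ p, Φ (enorm2 (Du k p.1 p.2)) ∂((volume.restrict Q).prod μ)) := by
          rw [integral_const_mul, integral_add (integrable_const _) (hDk k).1, integral_const]
          simp
      _ ≤ _ := by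
          have := (hDk k).2.1
          gcongr
  -- transfer
  have e1 : ∫ p, f p.1.1 p.1.2 p.2 (V p.1.1 p.1.2 p.2)
        ∂(((volume.restrict Q).prod μ).prod (volume.restrict (Ycube N))) =
      ∫ p, F p.1.1 p.1.2 p.2 (V p.1.1 p.1.2 p.2) ∂(nuY Q μ) := by
    refine integral_congr_ae ?_
    have h1 := (Measure.quasiMeasurePreserving_snd (μ := volume.restrict Q) (ν := μ)).ae hFf
    have h2 := (Measure.quasiMeasurePreserving_fst (μ := (volume.restrict Q).prod μ) (ν := volume.restrict (Ycube N))).ae h1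
    filter_upwards [h2] with p hp
    exact (hp _ _ _).symm
  have e2 : ∀ k, ∫ p, f p.1 (T ((ε k)⁻¹ • p.1) p.2) (((ε k) ^ 2)⁻¹ • p.1) (Du k p.1 p.2)
        ∂((volume.restrict Q).prod μ) =
      ∫ p, F p.1 (T ((ε k)⁻¹ • p.1) p.2) (((ε k) ^ 2)⁻¹ • p.1) (Du k p.1 p.2) ∂((volume.restrict Q).prod μ) := by
    intro k
    refine integral_congr_ae ?_
    have h1 := (Measure.quasiMeasurePreserving_snd (μ := volume.restrict Q) (ν := μ)).ae hFf
    have h2 := (S_mp hT (ε k) Q).quasiMeasurePreserving.ae h1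
    filter_upwards [h2] with p hp
    exact (hp _ _ _).symm
  rw [e1]
  simp_rw [e2]
  refine le_of_forall_pos_sub_le fun η hη => ?_
  refine le_liminf_of_le ?_ (core hN hT hε hε0 hQo hQb hF Du V hVmeas (fun k j => (hDk k).2.2 j) (fun j => hVk.2.2 j) hconv hG hFV η hη)
  exact IsBoundedUnder.isCoboundedUnder_ge ⟨_, eventually_map.2 (Eventually.of_forall hub)⟩
end
end

section
/- Let Φ be a Young function such that Φ and its conjugate Φ̃ are of class Δ₂, let {T(x)}_{x∈ℝ^N} be an N-dimensional dynamical system on Ω, and let (ε_k) ⊆ (0,1] with ε_k → 0. Let (u_k) be measurable functions on Q×Ω with sup_k ‖u_k‖_{Φ,Q×Ω} < ∞ which weakly stochastically 2-scale converge to u₀. Assume each u_k admits a weak x-gradient Du_k : Q×Ω → ℝ^N with sup_k ‖|Du_k|‖_{Φ,Q×Ω} < ∞, in the sense that ∫_{Q×Ω} u_k(x,ω)(∂θ/∂x_i)(x,ω) dx dμ = −∫_{Q×Ω} (Du_k)_i(x,ω) θ(x,ω) dx dμ for 1 ≤ i ≤ N and every bounded measurable θ : Q×Ω → ℝ that is C¹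 in x with bounded measurable x-gradient and vanishes for x outside some compact subset of Q. Then the 2-scale limit u₀ does not depend on the fast variable y: for every φ ∈ C_c^∞(Q), every bounded measurable ψ : Ω → ℝ admitting a bounded stochastic gradient, every ℤ^N-periodic g ∈ C^∞(ℝ^N), and every 1 ≤ i ≤ N, one has ∫_{Q×Ω×Y} u₀(x,ω,y) φ(x) ψ(ω) (∂g/∂y_i)(y) dx dμ(ω) dy = 0. -/
open MeasureTheory Filter Topology ENNReal

noncomputable section

/-- A bounded measurable `w : Ω → ℝ` admits the bounded stochastic gradient `G`. -/
def HasBddStochGrad {N : ℕ} {Ω : Type*} [MeasurableSpace Ω] (μ : Measure Ω)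
    (T : (Fin N → ℝ) → Ω → Ω) (w : Ω → ℝ) (G : Ω → Fin N → ℝ) : Prop :=
  Measurable w ∧ (∃ C : ℝ, ∀ ω, |w ω| ≤ C) ∧ Measurable G ∧
    (∃ C : ℝ, ∀ ω, enorm2 (G ω) ≤ C) ∧
    ∀ᵐ ω ∂μ, ContDiff ℝ 1 (fun y => w (T y ω)) ∧
      ∀ (y : Fin N → ℝ) (i : Fin N),
        fderiv ℝ (fun z => w (T z ω)) y (Pi.single i 1) = G (T y ω) i

theorem aux_l1 {X : Type*} [MeasurableSpace X] (ν : Measure X) [IsFiniteMeasure ν]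
    (Φ : ℝ → ℝ) (hΦ : IsYoung Φ) (M : ℝ≥0∞) (hM : M < ⊤) :
    ∃ C : ℝ, 0 ≤ C ∧ ∀ v : X → ℝ, Measurable v → luxNorm Φ ν v ≤ M →
      Integrable v ν ∧ ∫ x, |v x| ∂ν ≤ C := by
  obtain ⟨-, -, -, -, hnn, -, htop⟩ := hΦ
  obtain ⟨t1, ht1, hΦt⟩ : ∃ t1 : ℝ, 0 < t1 ∧ ∀ t, t1 ≤ t → t ≤ Φ t := by
    obtain ⟨a, ha⟩ := eventually_atTop.1 (htop.eventually_ge_atTop 1)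
    refine ⟨max a 1, by positivity, fun t ht => ?_⟩
    have h1 := ha t (le_trans (le_max_left _ _) ht)
    have h2 : 0 < t := lt_of_lt_of_le one_pos (le_trans (le_max_right _ _) ht)
    rw [le_div_iff₀ h2] at h1
    linarith
  have hM1 : M + 1 < ⊤ := by simp [hM]
  set C : ℝ≥0∞ := (M + 1) * (ENNReal.ofReal t1 * ν Set.univ + 1) with hC
  have hCt : C ≠ ⊤ := by
    refine ENNReal.mul_ne_top hM1.ne (ENNReal.add_ne_top.2 ⟨ENNReal.mul_ne_top (by simp) (measure_ne_top _ _), by simp⟩)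
  refine ⟨C.toReal, ENNReal.toReal_nonneg, fun v hv hl => ?_⟩
  have hlt : luxNorm Φ ν v < M + 1 := lt_of_le_of_lt hl (ENNReal.lt_add_right hM.ne one_ne_zero)
  obtain ⟨d, ⟨δ, hδ, rfl, hint⟩, hd⟩ := sInf_lt_iff.1 hlt
  have key : ∫⁻ x, ‖v x‖ₑ ∂ν ≤ C := by
    calc ∫⁻ x, ‖v x‖ₑ ∂ν ≤ ∫⁻ x, ENNReal.ofReal δ * (ENNReal.ofReal t1 + ENNReal.ofReal (Φ (|v x| / δ))) ∂ν := by
          refine lintegral_mono fun x => ?_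
          have h0 : 0 ≤ |v x| / δ := by positivity
          rw [← ENNReal.ofReal_add ht1.le (hnn _ h0), ← ENNReal.ofReal_mul hδ.le, Real.enorm_eq_ofReal_abs]
          apply ENNReal.ofReal_le_ofReal
          have : |v x| / δ ≤ t1 + Φ (|v x| / δ) := by
            rcases le_total t1 (|v x| / δ) with h | h
            · linarith [hΦt _ h]
            · linarith [hnn _ h0]
          rw [div_le_iff₀ hδ] at this
          linarith
      _ = ENNReal.ofReal δ * (ENNReal.ofReal t1 * ν Set.univ + ∫⁻ x, ENNReal.ofReal (Φ (|v x| / δ)) ∂ν) := by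
          rw [lintegral_const_mul' _ _ (by simp), lintegral_add_left measurable_const, lintegral_const]
      _ ≤ C := by
          rw [hC]; gcongr
  have hi : Integrable v ν := ⟨hv.aestronglyMeasurable, lt_of_le_of_lt key hCt.lt_top⟩
  refine ⟨hi, ?_⟩
  have := integral_norm_eq_lintegral_enorm (μ := ν) hv.aestronglyMeasurable
  simp only [Real.norm_eq_abs] at this
  rw [this]
  exact ENNReal.toReal_mono hCt key

theorem aux_bd {X : Type*} [MeasurableSpace X] (ν : Measure X) (v h : X → ℝ) (C B : ℝ)
    (hv : Integrable v ν) (hC : ∫ x, |v x| ∂ν ≤ C) (hh : Measurable h) (hB : ∀ x, |h x| ≤ B)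
    (hB0 : 0 ≤ B) : Integrable (fun x => v x * h x) ν ∧ |∫ x, v x * h x ∂ν| ≤ B * C := by
  have h1 : Integrable (fun x => v x * h x) ν :=
    hv.mul_bdd (c := B) hh.aestronglyMeasurable (ae_of_all _ fun x => by simpa using hB x)
  refine ⟨h1, ?_⟩
  calc |∫ x, v x * h x ∂ν| ≤ ∫ x, |v x * h x| ∂ν := abs_integral_le_integral_abs
    _ ≤ ∫ x, B * |v x| ∂ν := by
        refine integral_mono h1.abs (hv.abs.const_mul B) fun x => ?_
        simp only [abs_mul]
        rw [mul_comm]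
        exact mul_le_mul_of_nonneg_right (hB x) (abs_nonneg _)
    _ = B * ∫ x, |v x| ∂ν := integral_const_mul _ _
    _ ≤ B * C := by gcongr

theorem aux_per {N : ℕ} (g : (Fin N → ℝ) → ℝ) (hg : Continuous g) (hp : ZPeriodic g) :
    ∃ B : ℝ, ∀ y, |g y| ≤ B := by
  obtain ⟨B, hB⟩ := (isCompact_Icc (a := (0 : Fin N → ℝ)) (b := 1)).exists_bound_of_continuousOn
    hg.continuousOn
  refine ⟨B, fun y => ?_⟩
  have := hp y (fun i => -⌊y i⌋)
  rw [← this]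
  refine hB _ ⟨fun i => ?_, fun i => ?_⟩
  · simp only [Pi.add_apply, Pi.zero_apply]; push_cast
    linarith [Int.floor_le (y i)]
  · simp only [Pi.add_apply, Pi.one_apply]; push_cast
    linarith [Int.lt_floor_add_one (y i)]

theorem aux_dper {N : ℕ} (g : (Fin N → ℝ) → ℝ) (hp : ZPeriodic g) (v : Fin N → ℝ) :
    ZPeriodic (fun y => fderiv ℝ g y v) := by
  intro y k
  have : (fun z => g (z + fun i => (k i : ℝ))) = g := funext fun z => hp z k
  have h2 := fderiv_comp_add_right (𝕜 := ℝ) (f := g) (x := y) (fun i => (k i : ℝ))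
  simp only
  rw [← h2, this]

theorem aux_scale {N : ℕ} (f : (Fin N → ℝ) → ℝ) (hf : Differentiable ℝ f) (c : ℝ)
    (x : Fin N → ℝ) :
    HasFDerivAt (fun z => f (c • z)) (c • fderiv ℝ f (c • x)) x := by
  have h1 : HasFDerivAt (fun z : Fin N → ℝ => c • z) (c • ContinuousLinearMap.id ℝ (Fin N → ℝ)) x :=
    (hasFDerivAt_id x).const_smul c
  have h2 := (hf (c • x)).hasFDerivAt.comp x h1
  have h3 : c • fderiv ℝ f (c • x) =
      (fderiv ℝ f (c • x)).comp (c • ContinuousLinearMap.id ℝ (Fin N → ℝ)) := by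
    ext v; simp
  rw [h3]
  exact h2

theorem aux_theta {N : ℕ} (φ h g : (Fin N → ℝ) → ℝ) (hφ : Differentiable ℝ φ)
    (hh : Differentiable ℝ h) (hg : Differentiable ℝ g) (s e : ℝ) (he : e ≠ 0)
    (x v : Fin N → ℝ) :
    fderiv ℝ (fun z => s * (e ^ 2 * φ z * h (e⁻¹ • z) * g ((e ^ 2)⁻¹ • z))) x v =
      s * (e ^ 2 * fderiv ℝ φ x v * h (e⁻¹ • x) * g ((e ^ 2)⁻¹ • x)
        + e * φ x * fderiv ℝ h (e⁻¹ • x) v * g ((e ^ 2)⁻¹ • x)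
        + φ x * h (e⁻¹ • x) * fderiv ℝ g ((e ^ 2)⁻¹ • x) v) := by
  have h1 := (((((hφ x).hasFDerivAt.const_mul (e ^ 2)).mul (aux_scale h hh e⁻¹ x)).mul
    (aux_scale g hg (e ^ 2)⁻¹ x)).const_mul s).fderiv
  rw [show (fun z => s * (e ^ 2 * φ z * h (e⁻¹ • z) * g ((e ^ 2)⁻¹ • z))) = _ from rfl]
  erw [h1]
  simp
  field_simp
  ring

theorem aux_coord {N : ℕ} (v : Fin N → ℝ) (j : Fin N) : |v j| ≤ enorm2 v := by
  unfold enorm2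
  apply Real.abs_le_sqrt
  exact Finset.single_le_sum (f := fun j => v j ^ 2) (fun j _ => sq_nonneg _) (Finset.mem_univ j)

/-- the stochastic two-scale limit of a bounded sequence with bounded
gradients does not depend on the fast periodic variable. -/
theorem stmt12 {N : ℕ} (hN : 1 ≤ N) {Ω : Type*} [MeasurableSpace Ω] (μ : Measure Ω)
    [IsProbabilityMeasure μ]
    (Φ : ℝ → ℝ) (hΦ : IsYoung Φ) (hΦ2 : Delta2 Φ) (hΦc2 : Delta2 (conjY Φ))
    (T : (Fin N → ℝ) → Ω → Ω) (hT : IsDynSys μ T)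
    (Q : Set (Fin N → ℝ)) (hQo : IsOpen Q) (hQb : Bornology.IsBounded Q)
    (ε : ℕ → ℝ) (hε : ∀ k, ε k ∈ Set.Ioc (0 : ℝ) 1) (hε0 : Tendsto ε atTop (nhds 0))
    (u : ℕ → (Fin N → ℝ) → Ω → ℝ) (Du : ℕ → (Fin N → ℝ) → Ω → Fin N → ℝ)
    (humeas : ∀ k, Measurable fun p : (Fin N → ℝ) × Ω => u k p.1 p.2)
    (hubd : (⨆ k, luxNorm Φ ((volume.restrict Q).prod μ) fun p => u k p.1 p.2) < ⊤)
    (u₀ : (Fin N → ℝ) → Ω → (Fin N → ℝ) → ℝ)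
    (hu₀meas : Measurable fun p : ((Fin N → ℝ) × Ω) × (Fin N → ℝ) => u₀ p.1.1 p.1.2 p.2)
    (hu₀per : ∀ x ω, ZPeriodic (u₀ x ω))
    (hu₀bd : luxNorm Φ (((volume.restrict Q).prod μ).prod (volume.restrict (Ycube N)))
      (fun p => u₀ p.1.1 p.1.2 p.2) < ⊤)
    (hconv : WeakStoch2Scale μ T Q ε u u₀)
    (hDumeas : ∀ k, Measurable fun p : (Fin N → ℝ) × Ω => Du k p.1 p.2)
    (hDubd : (⨆ k, luxNorm Φ ((volume.restrict Q).prod μ)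
      fun p => enorm2 (Du k p.1 p.2)) < ⊤)
    (hgrad : ∀ (k : ℕ) (i : Fin N) (θ : (Fin N → ℝ) → Ω → ℝ),
      (Measurable fun p : (Fin N → ℝ) × Ω => θ p.1 p.2) →
      (∃ C : ℝ, ∀ x ω, |θ x ω| ≤ C) →
      (∀ ω, ContDiff ℝ 1 (fun x => θ x ω)) →
      (∀ j : Fin N, Measurable fun p : (Fin N → ℝ) × Ω =>
        fderiv ℝ (fun z => θ z p.2) p.1 (Pi.single j 1)) →
      (∃ C : ℝ, ∀ x ω (j : Fin N), |fderiv ℝ (fun z => θ z ω) x (Pi.single j 1)| ≤ C) →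
      (∃ K : Set (Fin N → ℝ), IsCompact K ∧ K ⊆ Q ∧ ∀ x ∉ K, ∀ ω, θ x ω = 0) →
      (∫ p, u k p.1 p.2 * fderiv ℝ (fun z => θ z p.2) p.1 (Pi.single i 1)
          ∂((volume.restrict Q).prod μ)) =
        -(∫ p, Du k p.1 p.2 i * θ p.1 p.2 ∂((volume.restrict Q).prod μ))) :
    ∀ φ : (Fin N → ℝ) → ℝ, ContDiff ℝ (⊤ : ℕ∞) φ → HasCompactSupport φ → tsupport φ ⊆ Q →
      ∀ ψ : Ω → ℝ, (∃ G : Ω → Fin N → ℝ, HasBddStochGrad μ T ψ G) →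
        ∀ g : (Fin N → ℝ) → ℝ, ContDiff ℝ (⊤ : ℕ∞) g → ZPeriodic g →
          ∀ i : Fin N,
            (∫ x in Q, (∫ ω, (∫ y in Ycube N,
              u₀ x ω y * φ x * ψ ω * fderiv ℝ g y (Pi.single i 1)) ∂μ)) = 0 := by
  intro φ hφ hφc hφs ψ hψ g hg hgp i
  obtain ⟨G, hψm, ⟨Bψ, hBψ⟩, hGm, ⟨BG, hBG⟩, hae⟩ := hψ
  obtain ⟨hT0, hTadd, hTmp, hTm⟩ := hT
  have hφ1 : ContDiff ℝ 1 φ := hφ.of_le (by exact_mod_cast le_top)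
  have hg1 : ContDiff ℝ 1 g := hg.of_le (by exact_mod_cast le_top)
  have hdφc : ∀ j : Fin N, Continuous fun x => fderiv ℝ φ x (Pi.single j 1) := fun j =>
    (hφ1.continuous_fderiv one_ne_zero).clm_apply continuous_const
  have hdgc : ∀ j : Fin N, Continuous fun x => fderiv ℝ g x (Pi.single j 1) := fun j =>
    (hg1.continuous_fderiv one_ne_zero).clm_apply continuous_const
  have : IsFiniteMeasure (volume.restrict Q) :=
    ⟨by rw [Measure.restrict_apply_univ]; exact hQb.measure_lt_top⟩
  -- bounds
  obtain ⟨Bφ, hBφ⟩ := hφc.exists_bound_of_continuous hφ1.continuous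
  obtain ⟨Bg, hBg⟩ := aux_per g hg1.continuous hgp
  have hdφb : ∀ j : Fin N, ∃ B, ∀ x, |fderiv ℝ φ x (Pi.single j 1)| ≤ B := fun j => by
    obtain ⟨B, hB⟩ := (hφc.fderiv_apply (𝕜 := ℝ) (Pi.single j 1)).exists_bound_of_continuous (hdφc j)
    exact ⟨B, hB⟩
  have hdgb : ∀ j : Fin N, ∃ B, ∀ x, |fderiv ℝ g x (Pi.single j 1)| ≤ B := fun j =>
    aux_per _ (hdgc j) (aux_dper g hgp _)
  choose Bdφ hBdφ using hdφb
  choose Bdg hBdg using hdgb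
  obtain ⟨B, hB0, hφB, hgB, hψB, hGB, hdφB, hdgB⟩ : ∃ B : ℝ, 0 ≤ B ∧ (∀ x, |φ x| ≤ B) ∧
      (∀ y, |g y| ≤ B) ∧ (∀ ω, |ψ ω| ≤ B) ∧ (∀ ω j, |G ω j| ≤ B) ∧
      (∀ j x, |fderiv ℝ φ x (Pi.single j 1)| ≤ B) ∧
      (∀ j x, |fderiv ℝ g x (Pi.single j 1)| ≤ B) := by
    have s1 : 0 ≤ ∑ j, |Bdφ j| := Finset.sum_nonneg fun j _ => abs_nonneg _
    have s2 : 0 ≤ ∑ j, |Bdg j| := Finset.sum_nonneg fun j _ => abs_nonneg _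
    have q1 := abs_nonneg Bφ
    have q2 := abs_nonneg Bg
    have q3 := abs_nonneg Bψ
    have q4 := abs_nonneg BG
    refine ⟨|Bφ| + |Bg| + |Bψ| + |BG| + ∑ j, |Bdφ j| + ∑ j, |Bdg j|, by positivity,
      fun x => ?_, fun x => ?_, fun x => ?_, fun ω j => ?_, fun j x => ?_, fun j x => ?_⟩
    · have := hBφ x
      rw [Real.norm_eq_abs] at this
      linarith [le_abs_self Bφ]
    · linarith [le_abs_self Bg, hBg x]
    · linarith [le_abs_self Bψ, hBψ x]
    · have : |G ω j| ≤ enorm2 (G ω) := aux_coord _ _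
      linarith [le_abs_self BG, hBG ω]
    · have := Finset.single_le_sum (f := fun j => |Bdφ j|) (fun j _ => abs_nonneg _) (Finset.mem_univ j)
      linarith [le_abs_self (Bdφ j), hBdφ j x]
    · have := Finset.single_le_sum (f := fun j => |Bdg j|) (fun j _ => abs_nonneg _) (Finset.mem_univ j)
      linarith [le_abs_self (Bdg j), hBdg j x]
  set ν := (volume.restrict Q).prod μ with hν
  obtain ⟨C, hC0, hC⟩ := aux_l1 ν Φ hΦ _ hubd
  obtain ⟨C', hC'0, hC'⟩ := aux_l1 ν Φ hΦ _ hDubd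
  have hu : ∀ k, Integrable (fun p : (Fin N → ℝ) × Ω => u k p.1 p.2) ν ∧
      ∫ p, |u k p.1 p.2| ∂ν ≤ C := fun k =>
    hC _ (humeas k) (le_iSup (fun k => luxNorm Φ ν fun p => u k p.1 p.2) k)
  have hDui : ∀ k, Measurable fun p : (Fin N → ℝ) × Ω => Du k p.1 p.2 i := fun k =>
    (measurable_pi_apply i).comp (hDumeas k)
  have hDu : ∀ k, Integrable (fun p : (Fin N → ℝ) × Ω => Du k p.1 p.2 i) ν ∧
      ∫ p, |Du k p.1 p.2 i| ∂ν ≤ C' := fun k => by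
    have hm : Measurable fun p : (Fin N → ℝ) × Ω => enorm2 (Du k p.1 p.2) := by
      unfold enorm2
      refine Real.continuous_sqrt.measurable.comp (Finset.measurable_sum _ fun j _ => ?_)
      exact ((measurable_pi_apply j).comp (hDumeas k)).pow_const 2
    obtain ⟨h1, h2⟩ := hC' _ hm (le_iSup (fun k => luxNorm Φ ν fun p => enorm2 (Du k p.1 p.2)) k)
    have h3 : Integrable (fun p : (Fin N → ℝ) × Ω => Du k p.1 p.2 i) ν :=
      h1.mono' (hDui k).aestronglyMeasurable (ae_of_all _ fun p => aux_coord _ _)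
    refine ⟨h3, le_trans (integral_mono h3.abs h1.abs fun p => ?_) h2⟩
    exact le_trans (aux_coord _ _) (le_abs_self _)
  -- the exceptional set
  obtain ⟨A, hAm, hA0, hA⟩ : ∃ A : Set Ω, MeasurableSet A ∧ μ A = 0 ∧ ∀ ω ∉ A,
      ContDiff ℝ 1 (fun y => ψ (T y ω)) ∧ ∀ (y : Fin N → ℝ) (i : Fin N),
        fderiv ℝ (fun z => ψ (T z ω)) y (Pi.single i 1) = G (T y ω) i := by
    obtain ⟨A, hsub, hm, h0⟩ := exists_measurable_superset_of_null hae
    refine ⟨A, hm, h0, fun ω hω => ?_⟩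
    by_contra hcon
    exact hω (hsub hcon)
  set s : Ω → ℝ := Set.indicator Aᶜ 1 with hs
  have hsm : Measurable s := measurable_one.indicator hAm.compl
  have hs1 : ∀ ω, |s ω| ≤ 1 := fun ω => by
    by_cases h : ω ∈ A <;> simp [hs, h]
  have hsae : ∀ᵐ p ∂ν, s p.2 = 1 := by
    have : ∀ᵐ ω ∂μ, s ω = 1 := by
      have : ∀ᵐ ω ∂μ, ω ∉ A := measure_eq_zero_iff_ae_notMem.1 hA0
      filter_upwards [this] with ω hω
      simp [hs, hω]
    exact Measure.quasiMeasurePreserving_snd.ae this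
  set J : ℕ → ℝ := fun k => ∫ x in Q, (∫ ω, u k x ω * φ x * ψ (T ((ε k)⁻¹ • x) ω) *
              fderiv ℝ g (((ε k) ^ 2)⁻¹ • x) (Pi.single i 1) ∂μ) with hJ
  have hbound : ∀ k, |J k| ≤ ε k * (B ^ 3 * C' + 2 * B ^ 3 * C) := by
    intro k
    obtain ⟨he0, he1⟩ := hε k
    obtain ⟨huI, huC⟩ := hu k
    obtain ⟨hDI, hDC⟩ := hDu k
    obtain ⟨e, hek⟩ : ∃ e, ε k = e := ⟨_, rfl⟩
    rw [hek] at he0 he1 ⊢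
    have m1 : Measurable fun p : (Fin N → ℝ) × Ω => T (e⁻¹ • p.1) p.2 :=
      hTm.comp ((measurable_fst.const_smul e⁻¹).prodMk measurable_snd)
    have mψ : Measurable fun p : (Fin N → ℝ) × Ω => ψ (T (e⁻¹ • p.1) p.2) := hψm.comp m1
    have mG : ∀ j, Measurable fun p : (Fin N → ℝ) × Ω => G (T (e⁻¹ • p.1) p.2) j := fun j =>
      (measurable_pi_apply j).comp (hGm.comp m1)
    have mφ : Measurable fun p : (Fin N → ℝ) × Ω => φ p.1 :=
      hφ1.continuous.measurable.comp measurable_fst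
    have mdφ : ∀ j, Measurable fun p : (Fin N → ℝ) × Ω => fderiv ℝ φ p.1 (Pi.single j 1) :=
      fun j => (hdφc j).measurable.comp measurable_fst
    have mg : Measurable fun p : (Fin N → ℝ) × Ω => g ((e ^ 2)⁻¹ • p.1) :=
      hg1.continuous.measurable.comp (measurable_fst.const_smul ((e ^ 2)⁻¹))
    have mdg : ∀ j, Measurable fun p : (Fin N → ℝ) × Ω =>
        fderiv ℝ g ((e ^ 2)⁻¹ • p.1) (Pi.single j 1) :=
      fun j => (hdgc j).measurable.comp (measurable_fst.const_smul ((e ^ 2)⁻¹))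
    have ms : Measurable fun p : (Fin N → ℝ) × Ω => s p.2 := hsm.comp measurable_snd
    have b3 : ∀ a b c : ℝ, |a| ≤ B → |b| ≤ B → |c| ≤ B → |a * b * c| ≤ B ^ 3 := by
      intro a b c ha hb hc
      rw [abs_mul, abs_mul]
      calc |a| * |b| * |c| ≤ B * B * B := by gcongr
        _ = B ^ 3 := by ring
    have bs : ∀ (ω : Ω) (a b : ℝ), |a| ≤ b → |s ω * a| ≤ b := by
      intro ω a b hab
      rw [abs_mul]
      nlinarith [hs1 ω, abs_nonneg a, abs_nonneg (s ω)]
    have hB3 : 0 ≤ B ^ 3 := by positivity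
    have he2 : e ^ 2 ≤ e := by nlinarith
    have he20 : 0 ≤ e ^ 2 := by positivity
    -- the test function
    set θ : (Fin N → ℝ) → Ω → ℝ := fun z ω =>
      s ω * (e ^ 2 * φ z * ψ (T (e⁻¹ • z) ω) * g ((e ^ 2)⁻¹ • z)) with hθ
    have hdθ : ∀ x ω j, fderiv ℝ (fun z => θ z ω) x (Pi.single j 1) =
        s ω * (e ^ 2 * fderiv ℝ φ x (Pi.single j 1) * ψ (T (e⁻¹ • x) ω) * g ((e ^ 2)⁻¹ • x)
        + e * φ x * G (T (e⁻¹ • x) ω) j * g ((e ^ 2)⁻¹ • x)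
        + φ x * ψ (T (e⁻¹ • x) ω) * fderiv ℝ g ((e ^ 2)⁻¹ • x) (Pi.single j 1)) := by
      intro x ω j
      by_cases hω : ω ∈ A
      · have h0 : s ω = 0 := by simp [hs, hω]
        simp [hθ, h0]
      · obtain ⟨c1, c2⟩ := hA ω hω
        have := aux_theta φ (fun y => ψ (T y ω)) g (hφ1.differentiable one_ne_zero)
          (c1.differentiable one_ne_zero) (hg1.differentiable one_ne_zero) (s ω) e he0.ne' x
          (Pi.single j 1)
        rw [c2] at this
        exact this
    have hθm : Measurable fun p : (Fin N → ℝ) × Ω => θ p.1 p.2 :=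
      ms.mul (((mφ.const_mul (e ^ 2)).mul mψ).mul mg)
    have hθB : ∀ x ω, |θ x ω| ≤ e * B ^ 3 := by
      intro x ω
      refine bs _ _ _ ?_
      have := b3 _ _ _ (hφB x) (hψB (T (e⁻¹ • x) ω)) (hgB ((e ^ 2)⁻¹ • x))
      rw [show e ^ 2 * φ x * ψ (T (e⁻¹ • x) ω) * g ((e ^ 2)⁻¹ • x) =
        e ^ 2 * (φ x * ψ (T (e⁻¹ • x) ω) * g ((e ^ 2)⁻¹ • x)) by ring, abs_mul,
        abs_of_nonneg he20]
      gcongr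
    set R : (Fin N → ℝ) × Ω → Fin N → ℝ := fun p j =>
      s p.2 * (e ^ 2 * fderiv ℝ φ p.1 (Pi.single j 1) * ψ (T (e⁻¹ • p.1) p.2) * g ((e ^ 2)⁻¹ • p.1)
        + e * φ p.1 * G (T (e⁻¹ • p.1) p.2) j * g ((e ^ 2)⁻¹ • p.1)) with hR
    set S : (Fin N → ℝ) × Ω → Fin N → ℝ := fun p j =>
      s p.2 * (φ p.1 * ψ (T (e⁻¹ • p.1) p.2) * fderiv ℝ g ((e ^ 2)⁻¹ • p.1) (Pi.single j 1)) with hS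
    have hdRS : ∀ x ω j, fderiv ℝ (fun z => θ z ω) x (Pi.single j 1) = R (x, ω) j + S (x, ω) j := by
      intro x ω j
      rw [hdθ]; simp only [hR, hS]; ring
    have hRm : ∀ j, Measurable fun p => R p j := fun j =>
      ms.mul (((((mdφ j).const_mul (e ^ 2)).mul mψ).mul mg).add
        (((mφ.const_mul e).mul (mG j)).mul mg))
    have hSm : ∀ j, Measurable fun p => S p j := fun j =>
      ms.mul ((mφ.mul mψ).mul (mdg j))
    have hRB : ∀ p j, |R p j| ≤ e * (2 * B ^ 3) := by
      rintro ⟨x, ω⟩ j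
      refine bs _ _ _ ?_
      have t1 := b3 _ _ _ (hdφB j x) (hψB (T (e⁻¹ • x) ω)) (hgB ((e ^ 2)⁻¹ • x))
      have t2 := b3 _ _ _ (hφB x) (hGB (T (e⁻¹ • x) ω) j) (hgB ((e ^ 2)⁻¹ • x))
      simp only
      rw [show ∀ a b c d f : ℝ, e ^ 2 * a * b * c + e * d * f * c =
        e ^ 2 * (a * b * c) + e * (d * f * c) by intros; ring]
      refine (abs_add_le _ _).trans ?_
      rw [abs_mul (e ^ 2), abs_mul e, abs_of_nonneg he20, abs_of_pos he0]
      calc _ ≤ e * B ^ 3 + e * B ^ 3 := by gcongr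
        _ = _ := by ring
    have hSB : ∀ p j, |S p j| ≤ B ^ 3 := by
      rintro ⟨x, ω⟩ j
      exact bs _ _ _ (b3 _ _ _ (hφB x) (hψB (T (e⁻¹ • x) ω)) (hdgB j ((e ^ 2)⁻¹ • x)))
    have key := hgrad k i θ hθm ⟨_, hθB⟩ (fun ω => by
        by_cases hω : ω ∈ A
        · have h0 : s ω = 0 := by simp [hs, hω]
          simp only [hθ, h0, zero_mul]
          exact contDiff_const
        · obtain ⟨c1, -⟩ := hA ω hω
          have c3 : ContDiff ℝ 1 fun z : Fin N → ℝ => ψ (T (e⁻¹ • z) ω) :=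
            c1.comp (contDiff_const_smul (e⁻¹))
          have c4 : ContDiff ℝ 1 fun z : Fin N → ℝ => g ((e ^ 2)⁻¹ • z) :=
            hg1.comp (contDiff_const_smul ((e ^ 2)⁻¹))
          exact contDiff_const.mul (((contDiff_const.mul hφ1).mul c3).mul c4))
      (fun j => by
        simp only [hdRS]
        exact (hRm j).add (hSm j))
      ⟨e * (2 * B ^ 3) + B ^ 3, fun x ω j => by
        rw [hdRS]
        exact (abs_add_le _ _).trans (add_le_add (hRB _ _) (hSB _ _))⟩
      ⟨tsupport φ, hφc, hφs, fun x hx ω => by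
        simp [hθ, image_eq_zero_of_notMem_tsupport hx]⟩
    obtain ⟨iR, bR⟩ := aux_bd ν (fun p => u k p.1 p.2) (fun p => R p i) C _ huI huC (hRm i)
      (fun p => hRB p i) (by positivity)
    obtain ⟨iS, -⟩ := aux_bd ν (fun p => u k p.1 p.2) (fun p => S p i) C _ huI huC (hSm i)
      (fun p => hSB p i) (by positivity)
    obtain ⟨-, bD⟩ := aux_bd ν (fun p => Du k p.1 p.2 i) (fun p => θ p.1 p.2) C' _ hDI hDC hθm
      (fun p => hθB p.1 p.2) (by positivity)
    have hJS : J k = ∫ p, u k p.1 p.2 * S p i ∂ν := by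
      have hcongr : (fun p : (Fin N → ℝ) × Ω => u k p.1 p.2 * S p i) =ᵐ[ν]
          fun p => u k p.1 p.2 * φ p.1 * ψ (T (e⁻¹ • p.1) p.2) *
            fderiv ℝ g ((e ^ 2)⁻¹ • p.1) (Pi.single i 1) := by
        filter_upwards [hsae] with p hp
        simp only [hS, hp]; ring
      rw [integral_congr_ae hcongr]
      simp only [hJ, hek]
      exact (integral_prod _ (iS.congr hcongr)).symm
    have hsum : ∫ p, u k p.1 p.2 * fderiv ℝ (fun z => θ z p.2) p.1 (Pi.single i 1) ∂ν =
        (∫ p, u k p.1 p.2 * R p i ∂ν) + ∫ p, u k p.1 p.2 * S p i ∂ν := by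
      rw [← integral_add iR iS]
      refine integral_congr_ae (ae_of_all _ fun p => ?_)
      simp only [hdRS]; ring
    rw [hsum, ← hJS] at key
    have : J k = -(∫ p, Du k p.1 p.2 i * θ p.1 p.2 ∂ν) - ∫ p, u k p.1 p.2 * R p i ∂ν := by
      linarith
    rw [this]
    have w1 := abs_le.1 bR
    have w2 := abs_le.1 bD
    rw [abs_le]
    constructor <;> nlinarith [w1.1, w1.2, w2.1, w2.2]
  have hJ0 : Tendsto J atTop (nhds 0) := by
    refine squeeze_zero_norm hbound ?_
    simpa using hε0.mul_const (B ^ 3 * C' + 2 * B ^ 3 * C)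
  have hJ1 := hconv φ hφ hφc hφs ψ hψm ⟨B, hψB⟩ (fun y => fderiv ℝ g y (Pi.single i 1))
    (hdgc i) (aux_dper g hgp _)
  exact tendsto_nhds_unique hJ1 hJ0
end
end
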